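/- arXiv:1711.03073 — 7 statements merged into one kernel-verified Lean document; each statement's English description precedes it below -/
import Mathlib

section
/- Let n ≥ 1 and let f : {-1,1}^n → ℝ be any function. Then f can be implemented on the Boolean hypercube by a Sum-of-ReLU circuit using at most min{2^n, Σ_{S ⊆ {1,...,n}, f̂(S) ≠ 0} |S|} ReLU gates; that is, there exist w ≤ min{2^n, Σ_{S: f̂(S)≠0} |S|}, vectors a_1,...,a_w ∈ ℝ^n and reals b_1,...,b_w, c_0, c_1,...,c_w such that f(x) = c_0 + Σ_{i=1}^w c_i · max(0, ⟨a_i, x⟩ + b_i) for every x ∈ {-1,1}^n. -/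
/-!
Gate counts add up under sums, so everything rests on one remark: a function of an integer-valued
affine form `t` with `0 ≤ t ≤ k` costs `k` gates, since interpolating it at the `k + 1` possible
values of `t` takes a constant and `k` functions `max 0 (t - i)`. In particular, for weights
`d : Fin n → ℕ`, a function of `∑ j, d j * [x j = 1]` costs `∑ j, d j` gates.

The weights `d j = 2 ^ j` separate all points of the hypercube, so every `f` costs
`∑ j, 2 ^ j = 2 ^ n - 1` gates. The indicator weights of `S` determine the parity `χ_S`, which hence
costs `|S|` gates, and Fourier inversion writes `f` as a combination of the `χ_S` with `f̂(S) ≠ 0`.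
-/

/-- The ±1 real encoding of a Boolean vector. -/
def pmEnc {n : ℕ} (x : Fin n → Bool) : Fin n → ℝ := fun i => if x i then 1 else -1

/-- The Fourier coefficient of `f : {-1,1}^n → ℝ` at `S ⊆ {1,…,n}`. -/
noncomputable def boolFourierCoeff {n : ℕ} (f : (Fin n → Bool) → ℝ) (S : Finset (Fin n)) : ℝ :=
  (1 / 2 ^ n) * ∑ x : Fin n → Bool, f x * ∏ i ∈ S, pmEnc x i

lemma exists_relu_interpolation {𝕜 : Type*} [Field 𝕜] [LinearOrder 𝕜] [IsStrictOrderedRing 𝕜]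
    {u : ℕ → 𝕜} (hu : StrictMono u) (g : ℕ → 𝕜) (k : ℕ) :
    ∃ c : ℕ → 𝕜, ∀ t ≤ k, g t = g 0 + ∑ i ∈ Finset.range k, c i * max 0 (u t - u i) := by
  induction k with
  | zero => exact ⟨0, fun t ht => by simp [Nat.le_zero.mp ht]⟩
  | succ k ih =>
    obtain ⟨c, hc⟩ := ih
    -- The new gate vanishes at all nodes up to `u k`, so it only corrects the value at `u (k + 1)`.
    let p := g 0 + ∑ i ∈ Finset.range k, c i * max 0 (u (k + 1) - u i)
    let r := (g (k + 1) - p) / (u (k + 1) - u k)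
    have sum_update (t : ℕ) :
        ∑ i ∈ Finset.range k, Function.update c k r i * max 0 (u t - u i) =
          ∑ i ∈ Finset.range k, c i * max 0 (u t - u i) :=
      Finset.sum_congr rfl fun i hi => by
        rw [Function.update_of_ne (Finset.mem_range.mp hi).ne]
    refine ⟨Function.update c k r, fun t ht => ?_⟩
    rw [Finset.sum_range_succ, sum_update, Function.update_self, ← add_assoc]
    rcases Nat.le_succ_iff.mp ht with ht | rfl
    · rw [max_eq_left (sub_nonpos.mpr (hu.monotone ht)), mul_zero, add_zero, hc t ht]
    · have node_lt : 0 < u (k + 1) - u k := sub_pos.mpr (hu k.lt_succ_self)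
      rw [max_eq_right node_lt.le, div_mul_cancel₀ _ node_lt.ne', add_sub_cancel]

/-- A Sum-of-ReLU circuit with `w` gates computes `f : X → ℝ`, where the circuit reads a point `x`
through its real encoding `e x`. For the Boolean hypercube, `e = pmEnc`. -/
def IsSumOfRelu {X ι : Type*} [Fintype ι] (e : X → ι → ℝ) (w : ℕ) (f : X → ℝ) : Prop :=
  ∃ (a : Fin w → ι → ℝ) (b c : Fin w → ℝ) (c₀ : ℝ),
    ∀ x, f x = c₀ + ∑ i, c i * max 0 (∑ j, a i j * e x j + b i)

namespace IsSumOfRelu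

variable {X ι : Type*} [Fintype ι] {e : X → ι → ℝ}

lemma const (r : ℝ) : IsSumOfRelu e 0 fun _ => r :=
  ⟨0, 0, 0, r, fun x => by simp⟩

lemma add {w₁ w₂ : ℕ} {f g : X → ℝ} (hf : IsSumOfRelu e w₁ f) (hg : IsSumOfRelu e w₂ g) :
    IsSumOfRelu e (w₁ + w₂) fun x => f x + g x := by
  obtain ⟨a₁, b₁, c₁, r₁, hf⟩ := hf
  obtain ⟨a₂, b₂, c₂, r₂, hg⟩ := hg
  refine ⟨Fin.append a₁ a₂, Fin.append b₁ b₂, Fin.append c₁ c₂, r₁ + r₂, fun x => ?_⟩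
  simp only [hf x, hg x, Fin.sum_univ_add, Fin.append_left, Fin.append_right]
  ring

lemma sum {κ : Type*} {s : Finset κ} {w : κ → ℕ} {f : κ → X → ℝ}
    (hf : ∀ k ∈ s, IsSumOfRelu e (w k) (f k)) :
    IsSumOfRelu e (∑ k ∈ s, w k) fun x => ∑ k ∈ s, f k x := by
  classical
  induction s using Finset.induction_on with
  | empty => simpa using const 0
  | insert k s hk ih =>
    simp only [Finset.sum_insert hk]
    exact (hf k (Finset.mem_insert_self k s)).add
      (ih fun i hi => hf i (Finset.mem_insert_of_mem hi))

lemma comp_of_affine_eq {u : ℕ → ℝ} (hu : StrictMono u) {t : X → ℕ} {k : ℕ} (ht : ∀ x, t x ≤ k)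
    {a : ι → ℝ} {b : ℝ} (htu : ∀ x, ∑ j, a j * e x j + b = u (t x)) (g : ℕ → ℝ) :
    IsSumOfRelu e k fun x => g (t x) := by
  obtain ⟨c, hc⟩ := exists_relu_interpolation hu g k
  refine ⟨fun _ => a, fun i => b - u i, fun i => c i, g 0, fun x => ?_⟩
  simp only [← add_sub_assoc, htu, hc (t x) (ht x), Finset.sum_range]

end IsSumOfRelu

section Hypercube

variable {n : ℕ}

lemma pmEnc_eq_two_mul_toNat_sub_one (x : Fin n → Bool) (i : Fin n) :
    pmEnc x i = 2 * (x i).toNat - 1 := by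
  cases h : x i <;> norm_num [pmEnc, h]

lemma prod_pmEnc (S : Finset (Fin n)) (x : Fin n → Bool) :
    ∏ i ∈ S, pmEnc x i = (-1) ^ (S.card + ∑ i ∈ S, (x i).toNat) := by
  have pmEnc_eq (i : Fin n) : pmEnc x i = (-1) ^ (1 + (x i).toNat) := by
    cases h : x i <;> simp [pmEnc, h]
  simp only [pmEnc_eq, Finset.prod_pow_eq_pow_sum, Finset.sum_add_distrib, Finset.card_eq_sum_ones]

lemma isSumOfRelu_comp_weighted_sum (d : Fin n → ℕ) (g : ℕ → ℝ) :
    IsSumOfRelu pmEnc (∑ j, d j) fun x => g (∑ j, d j * (x j).toNat) := by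
  refine IsSumOfRelu.comp_of_affine_eq (u := Nat.cast) (a := fun j => d j / 2)
    (b := ∑ j, (d j : ℝ) / 2) Nat.strictMono_cast (fun x => ?_) (fun x => ?_) g
  · exact Finset.sum_le_sum fun j _ => mul_le_of_le_one_right (Nat.zero_le _) (Bool.toNat_le _)
  · push_cast
    rw [← Finset.sum_add_distrib]
    refine Finset.sum_congr rfl fun j _ => ?_
    rw [pmEnc_eq_two_mul_toNat_sub_one]
    ring

lemma sum_two_pow_mul_toNat_injective :
    Function.Injective fun x : Fin n → Bool => ∑ j : Fin n, 2 ^ (j : ℕ) * (x j).toNat := by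
  intro x y h
  let digits (z : Fin n → Bool) (j : Fin n) : Fin 2 := finTwoEquiv.symm (z j)
  have val_symm : ∀ b : Bool, (finTwoEquiv.symm b : ℕ) = b.toNat := by decide
  have digits_eq : digits x = digits y := finFunctionFinEquiv.injective <| Fin.ext <| by
    simpa only [finFunctionFinEquiv_apply, digits, val_symm, mul_comm] using h
  exact funext fun j => finTwoEquiv.symm.injective (congrFun digits_eq j)

lemma isSumOfRelu_two_pow_sub_one (f : (Fin n → Bool) → ℝ) :
    IsSumOfRelu pmEnc (2 ^ n - 1) f := by
  have h := isSumOfRelu_comp_weighted_sum (fun j : Fin n => 2 ^ (j : ℕ))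
    (Function.extend (fun x : Fin n → Bool => ∑ j : Fin n, 2 ^ (j : ℕ) * (x j).toNat) f 0)
  simpa only [sum_two_pow_mul_toNat_injective.extend_apply, Fin.sum_univ_eq_sum_range (2 ^ ·),
    Nat.geomSum_eq le_rfl, Nat.add_one_sub_one, Nat.div_one] using h

lemma isSumOfRelu_mul_prod_pmEnc (r : ℝ) (S : Finset (Fin n)) :
    IsSumOfRelu pmEnc S.card fun x => r * ∏ i ∈ S, pmEnc x i := by
  have h := isSumOfRelu_comp_weighted_sum (fun j => if j ∈ S then 1 else 0)
    fun t => r * (-1) ^ (S.card + t)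
  simpa [prod_pmEnc] using h

lemma sum_prod_pmEnc_mul_prod_pmEnc (x y : Fin n → Bool) :
    ∑ S : Finset (Fin n), (∏ i ∈ S, pmEnc x i) * ∏ i ∈ S, pmEnc y i =
      if x = y then 2 ^ n else 0 := by
  have sum_eq_prod : ∑ S : Finset (Fin n), (∏ i ∈ S, pmEnc x i) * ∏ i ∈ S, pmEnc y i =
      ∏ i, (1 + pmEnc x i * pmEnc y i) := by
    simp only [Finset.prod_one_add, Finset.powerset_univ, Finset.prod_mul_distrib]
  have factor_eq (i : Fin n) : 1 + pmEnc x i * pmEnc y i = if x i = y i then 2 else 0 := by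
    cases hx : x i <;> cases hy : y i <;> norm_num [pmEnc, hx, hy]
  simp only [sum_eq_prod, factor_eq]
  split_ifs with h
  · simp [h]
  · obtain ⟨i, hi⟩ := Function.ne_iff.mp h
    exact Finset.prod_eq_zero (Finset.mem_univ i) (if_neg hi)

lemma sum_boolFourierCoeff_mul_prod_pmEnc (f : (Fin n → Bool) → ℝ) (x : Fin n → Bool) :
    ∑ S, boolFourierCoeff f S * ∏ i ∈ S, pmEnc x i = f x := by
  calc ∑ S, boolFourierCoeff f S * ∏ i ∈ S, pmEnc x i
      = 1 / 2 ^ n * ∑ y, f y *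
          ∑ S : Finset (Fin n), (∏ i ∈ S, pmEnc y i) * ∏ i ∈ S, pmEnc x i := by
        simp only [boolFourierCoeff, mul_assoc, Finset.sum_mul, ← Finset.mul_sum]
        rw [Finset.sum_comm]
        simp only [Finset.mul_sum]
    _ = 1 / 2 ^ n * (f x * 2 ^ n) := by simp [sum_prod_pmEnc_mul_prod_pmEnc]
    _ = f x := by field_simp

open Classical in
lemma isSumOfRelu_sum_card_boolFourierCoeff_ne_zero (f : (Fin n → Bool) → ℝ) :
    IsSumOfRelu pmEnc (∑ S with boolFourierCoeff f S ≠ 0, S.card) f := by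
  have hf : f = fun x => ∑ S with boolFourierCoeff f S ≠ 0,
      boolFourierCoeff f S * ∏ i ∈ S, pmEnc x i := by
    funext x
    rw [Finset.sum_filter_of_ne fun S _ => left_ne_zero_of_mul,
      sum_boolFourierCoeff_mul_prod_pmEnc]
  have h := IsSumOfRelu.sum (s := {S | boolFourierCoeff f S ≠ 0})
    fun S _ => isSumOfRelu_mul_prod_pmEnc (boolFourierCoeff f S) S
  rwa [← hf] at h

end Hypercube

open Classical in
/-- any `f : {-1,1}^n → ℝ` is computed on the hypercube by a Sum-of-ReLU
circuit with at most `min{2^n, Σ_{S : f̂(S) ≠ 0} |S|}` ReLU gates. -/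
theorem sum_of_relu_represents_any_pseudo_boolean (n : ℕ) (hn : 1 ≤ n)
    (f : (Fin n → Bool) → ℝ) :
    ∃ w : ℕ,
      w ≤ min (2 ^ n)
        (∑ S ∈ Finset.univ.filter (fun S : Finset (Fin n) => boolFourierCoeff f S ≠ 0), S.card) ∧
      ∃ (a : Fin w → Fin n → ℝ) (b c : Fin w → ℝ) (c₀ : ℝ),
        ∀ x : Fin n → Bool,
          f x = c₀ + ∑ i, c i * max 0 (∑ j, a i j * pmEnc x j + b i) := by
  rcases le_total (2 ^ n)
    (∑ S ∈ Finset.univ.filter (fun S : Finset (Fin n) => boolFourierCoeff f S ≠ 0), S.card)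
    with h | h
  · exact ⟨2 ^ n - 1, le_min (Nat.sub_le _ _) ((Nat.sub_le _ _).trans h),
      isSumOfRelu_two_pow_sub_one f⟩
  · exact ⟨_, le_min h le_rfl, isSumOfRelu_sum_card_boolFourierCoeff_ne_zero f⟩
end

section
/- The function (x_1, x_2) ↦ max{0, x_1, x_2} on ℝ² cannot be computed by any Sum-of-ReLU circuit: for every w ∈ ℕ, vectors a_1,...,a_w ∈ ℝ² and reals b_1,...,b_w, c_0, c_1,...,c_w, the function x ↦ c_0 + Σ_{i=1}^w c_i · max(0, ⟨a_i, x⟩ + b_i) is not equal to max{0, x_1, x_2} on all of ℝ². -/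
/-!
Since `max 0 s - max 0 (-s) = s`, a bias-free ReLU gate has a linear odd part, and a bias `b` moves
it by at most `|b|`. So for every Sum-of-ReLU circuit `F` the function `x ↦ F x - F (-x)` is within
bounded distance of a linear functional; if `F` is positively homogeneous, scaling `x` up forces
equality. But for `F = max {0, x₁, x₂}`, which is positively homogeneous, `F x - F (-x)` takes the
value `1` at each of `(1, 0)`, `(0, 1)` and `(1, 1)`, so it is not additive.
-/

lemma abs_relu_sub_relu_neg_sub_le {G : Type*} [AddCommGroup G] [LinearOrder G]
    [IsOrderedAddMonoid G] (s b : G) :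
    |max 0 (s + b) - max 0 (-s + b) - s| ≤ |b| := by
  have shift : max 0 (s + b) - s = max (-s) b := by
    rw [← max_sub_sub_right, zero_sub, add_sub_cancel_left]
  calc |max 0 (s + b) - max 0 (-s + b) - s|
      = |max (-s) b - max (-s + b) 0| := by rw [sub_right_comm, shift, max_comm 0]
    _ ≤ max |-s - (-s + b)| |b - 0| := abs_max_sub_max_le_max _ _ _ _
    _ = |b| := by simp

section OrderedRing

variable {R ι E : Type*} [CommRing R] [LinearOrder R] [Fintype ι] [AddCommGroup E] [Module R E]

/-- The function computed by a Sum-of-ReLU circuit. Gate `i` has weight vector `ℓ i`, encoded as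
the linear functional `⟨a_i, ·⟩`, bias `b i` and output weight `c i`; `c₀` is the output bias. -/
def sumOfReLU (ℓ : ι → Module.Dual R E) (b c : ι → R) (c₀ : R) (x : E) : R :=
  c₀ + ∑ i, c i * max 0 (ℓ i x + b i)

lemma abs_sumOfReLU_sub_sumOfReLU_neg_sub_le [IsStrictOrderedRing R] (ℓ : ι → Module.Dual R E)
    (b c : ι → R) (c₀ : R) (x : E) :
    |sumOfReLU ℓ b c c₀ x - sumOfReLU ℓ b c c₀ (-x) - (∑ i, c i • ℓ i) x| ≤
      ∑ i, |c i| * |b i| := by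
  have gatewise : sumOfReLU ℓ b c c₀ x - sumOfReLU ℓ b c c₀ (-x) - (∑ i, c i • ℓ i) x =
      ∑ i, c i * (max 0 (ℓ i x + b i) - max 0 (-ℓ i x + b i) - ℓ i x) := by
    simp only [sumOfReLU, map_neg, LinearMap.sum_apply, LinearMap.smul_apply, smul_eq_mul,
      mul_sub, Finset.sum_sub_distrib]
    ring
  calc |sumOfReLU ℓ b c c₀ x - sumOfReLU ℓ b c c₀ (-x) - (∑ i, c i • ℓ i) x|
      ≤ ∑ i, |c i * (max 0 (ℓ i x + b i) - max 0 (-ℓ i x + b i) - ℓ i x)| := by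
        rw [gatewise]
        exact Finset.abs_sum_le_sum_abs _ _
    _ ≤ ∑ i, |c i| * |b i| := by
        simp only [abs_mul]
        gcongr ∑ i, |c i| * ?_
        exact abs_relu_sub_relu_neg_sub_le _ _

end OrderedRing

section OrderedField

variable {𝕜 : Type*} [Field 𝕜] [LinearOrder 𝕜] [IsStrictOrderedRing 𝕜]

lemma eq_zero_of_forall_pos_abs_mul_le {δ C : 𝕜} (h : ∀ t > 0, |t * δ| ≤ C) : δ = 0 := by
  by_contra hδ
  have hC : 0 ≤ C := (abs_nonneg _).trans (h 1 one_pos)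
  have hle := h ((C + 1) / |δ|) (by positivity)
  rw [abs_mul, abs_div, abs_abs, div_mul_cancel₀ _ (abs_ne_zero.2 hδ),
    abs_of_pos (by positivity)] at hle
  linarith

variable {ι : Type*} [Fintype ι]

theorem sumOfReLU_sub_sumOfReLU_neg_eq_of_posHomogeneous {E : Type*} [AddCommGroup E] [Module 𝕜 E]
    {ℓ : ι → Module.Dual 𝕜 E} {b c : ι → 𝕜} {c₀ : 𝕜}
    (hom : ∀ t > 0, ∀ x, sumOfReLU ℓ b c c₀ (t • x) = t * sumOfReLU ℓ b c c₀ x) (x : E) :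
    sumOfReLU ℓ b c c₀ x - sumOfReLU ℓ b c c₀ (-x) = (∑ i, c i • ℓ i) x := by
  refine sub_eq_zero.1 (eq_zero_of_forall_pos_abs_mul_le (C := ∑ i, |c i| * |b i|) fun t ht => ?_)
  have bound := abs_sumOfReLU_sub_sumOfReLU_neg_sub_le ℓ b c c₀ (t • x)
  rwa [← smul_neg, hom t ht, hom t ht, map_smul, smul_eq_mul, ← mul_sub, ← mul_sub] at bound

theorem max_0_x_y_not_sum_of_relu_general (ℓ : ι → Module.Dual 𝕜 (Fin 2 → 𝕜)) (b c : ι → 𝕜)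
    (c₀ : 𝕜) :
    sumOfReLU ℓ b c c₀ ≠ fun x => max 0 (max (x 0) (x 1)) := by
  intro h
  have hom (t : 𝕜) (ht : t > 0) (x : Fin 2 → 𝕜) :
      sumOfReLU ℓ b c c₀ (t • x) = t * sumOfReLU ℓ b c c₀ x := by
    simp [h, mul_max_of_nonneg _ _ ht.le]
  have odd_part (x : Fin 2 → 𝕜) :
      max 0 (max (x 0) (x 1)) - max 0 (max (-x 0) (-x 1)) = (∑ i, c i • ℓ i) x := by
    rw [← sumOfReLU_sub_sumOfReLU_neg_eq_of_posHomogeneous hom x, h]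
    rfl
  have at_e₁ : (∑ i, c i • ℓ i) ![1, 0] = 1 := by simp [← odd_part]
  have at_e₂ : (∑ i, c i • ℓ i) ![0, 1] = 1 := by simp [← odd_part]
  have at_sum : (∑ i, c i • ℓ i) (![1, 0] + ![0, 1]) = 1 := by simp [← odd_part]
  rw [map_add, at_e₁, at_e₂] at at_sum
  linarith

end OrderedField

/-- no Sum-of-ReLU circuit computes `(x₁,x₂) ↦ max{0, x₁, x₂}` on all of `ℝ²`. -/
theorem max_0_x_y_not_sum_of_relu (w : ℕ) (a : Fin w → Fin 2 → ℝ)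
    (b c : Fin w → ℝ) (c₀ : ℝ) :
    ¬ ∀ x : Fin 2 → ℝ,
        c₀ + ∑ i, c i * max 0 (∑ j, a i j * x j + b i) = max 0 (max (x 0) (x 1)) :=
  fun h => max_0_x_y_not_sum_of_relu_general (fun i => dotProductEquiv ℝ (Fin 2) (a i)) b c c₀
    (funext h)
end

section
/- Let n ≥ 1 and define f : {-1,1}^n → ℝ by f(x) = Σ_{i=1}^n 2^i · (1 + x_i)/2. Then (a) f can be implemented on {-1,1}^n by a Sum-of-ReLU circuit with at most 2 ReLU gates, and (b) every Sum-of-LTF circuit with w LTF gates that agrees with f on all of {-1,1}^n must have w ≥ n. -/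
/-- The function `f(x) = Σ_{i=1}^n 2^i (1+x_i)/2` on `{-1,1}^n`. -/
noncomputable def binValFun {n : ℕ} (x : Fin n → Bool) : ℝ :=
  ∑ i : Fin n, 2 ^ ((i : ℕ) + 1) * ((1 + pmEnc x i) / 2)

/-! The function `f` is affine in the `±1` inputs and nonnegative on the cube, so a single ReLU gate
computes it. It is also twice the number with binary digits `x`, hence injective on the cube. A
function of the outputs of `w` Boolean gates takes at most `2 ^ w` values, so `2 ^ n ≤ 2 ^ w`. -/

lemma natOfBits_eq_sum {n : ℕ} (x : Fin n → Bool) :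
    Nat.ofBits x = ∑ i : Fin n, 2 ^ (i : ℕ) * (x i).toNat := by
  induction n with
  | zero => simp
  | succ n ih =>
    rw [Nat.ofBits_succ, ih, Fin.sum_univ_succ, Finset.mul_sum, add_comm]
    simp [pow_succ', mul_assoc]

lemma natOfBits_injective (n : ℕ) : Function.Injective (Nat.ofBits (n := n)) := by
  intro x y h
  funext i
  rw [← Nat.testBit_ofBits_lt x i i.isLt, h, Nat.testBit_ofBits_lt y i i.isLt]

lemma one_add_pmEnc_div_two {n : ℕ} (x : Fin n → Bool) (i : Fin n) :
    (1 + pmEnc x i) / 2 = (x i).toNat := by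
  cases h : x i <;> simp [pmEnc, h]

lemma binValFun_eq_two_mul_ofBits {n : ℕ} (x : Fin n → Bool) :
    binValFun x = 2 * Nat.ofBits x := by
  simp only [binValFun, one_add_pmEnc_div_two, natOfBits_eq_sum, Nat.cast_sum, Nat.cast_mul,
    Nat.cast_pow, Nat.cast_ofNat, Finset.mul_sum, pow_succ', mul_assoc]

lemma binValFun_nonneg {n : ℕ} (x : Fin n → Bool) : 0 ≤ binValFun x := by
  rw [binValFun_eq_two_mul_ofBits]
  positivity

lemma binValFun_injective (n : ℕ) : Function.Injective (binValFun (n := n)) := by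
  intro x y h
  rw [binValFun_eq_two_mul_ofBits, binValFun_eq_two_mul_ofBits] at h
  exact natOfBits_injective n (Nat.cast_injective (mul_left_cancel₀ two_ne_zero h))

lemma binValFun_eq_affine {n : ℕ} (x : Fin n → Bool) :
    binValFun x = ∑ j : Fin n, 2 ^ (j : ℕ) * pmEnc x j + ∑ j : Fin n, 2 ^ (j : ℕ) := by
  rw [binValFun, ← Finset.sum_add_distrib]
  exact Finset.sum_congr rfl fun j _ => by ring

lemma card_le_card_of_injective_boolCube {ι κ : Type*} [Fintype ι] [Fintype κ]
    {g : (ι → Bool) → κ → Bool} (hg : Function.Injective g) :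
    Fintype.card ι ≤ Fintype.card κ := by
  classical
  have hcard : 2 ^ Fintype.card ι ≤ 2 ^ Fintype.card κ := by
    simpa only [Fintype.card_fun, Fintype.card_bool] using Fintype.card_le_of_injective g hg
  exact (Nat.pow_le_pow_iff_right one_lt_two).mp hcard

theorem linear_function_relu_vs_ltf_general (n : ℕ) :
    (∃ (a : Fin n → ℝ) (b : ℝ), ∀ x : Fin n → Bool,
      binValFun x = max 0 (∑ j, a j * pmEnc x j + b)) ∧
    (∀ (w : ℕ) (gates : (Fin n → Bool) → Fin w → Bool) (out : (Fin w → Bool) → ℝ),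
      (∀ x : Fin n → Bool, binValFun x = out (gates x)) → n ≤ w) := by
  refine ⟨⟨fun j => 2 ^ (j : ℕ), ∑ j : Fin n, 2 ^ (j : ℕ), fun x => ?_⟩,
    fun w gates out h => ?_⟩
  · rw [← binValFun_eq_affine, max_eq_right (binValFun_nonneg x)]
  · have h_comp : out ∘ gates = binValFun := funext fun x => (h x).symm
    have h_gates : Function.Injective gates :=
      .of_comp (f := out) (h_comp ▸ binValFun_injective n)
    simpa only [Fintype.card_fin] using card_le_card_of_injective_boolCube h_gates

/-- (a) `f(x) = Σ_i 2^i (1+x_i)/2` is computed on `{-1,1}^n` by a Sum-of-ReLU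
circuit with at most 2 ReLU gates; (b) any Sum-of-LTF circuit computing `f` on `{-1,1}^n`
needs at least `n` LTF gates. -/
theorem linear_function_relu_vs_ltf (n : ℕ) (hn : 1 ≤ n) :
    (∃ w : ℕ, w ≤ 2 ∧
      ∃ (a : Fin w → Fin n → ℝ) (b c : Fin w → ℝ) (c₀ : ℝ),
        ∀ x : Fin n → Bool,
          binValFun x = c₀ + ∑ i, c i * max 0 (∑ j, a i j * pmEnc x j + b i)) ∧
    (∀ (w : ℕ) (a : Fin w → Fin n → ℝ) (b c : Fin w → ℝ) (c₀ : ℝ),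
      (∀ x : Fin n → Bool,
        binValFun x =
          c₀ + ∑ i, c i * (if 0 ≤ ∑ j, a i j * pmEnc x j + b i then 1 else 0)) →
      n ≤ w) := by
  obtain ⟨⟨a, b, h_relu⟩, h_gates⟩ := linear_function_relu_vs_ltf_general n
  exact ⟨⟨1, one_le_two, fun _ => a, fun _ => b, fun _ => 1, 0, by simpa using h_relu⟩,
    fun w a b c c₀ h => h_gates w (fun x i => decide (0 ≤ ∑ j, a i j * pmEnc x j + b i))
      (fun s => c₀ + ∑ i, c i * if s i then 1 else 0) (by simpa using h)⟩
end

section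
/- For every δ ∈ (0, 1/2) there exist N ∈ ℕ and a constant c > 0 such that for all n ≥ N and all ε with √(2·(log₂ n)^{2/(2-δ)} / n) < ε ≤ 1/2, the following holds: if an LTF-of-ReLU circuit F with w ReLU gates on the inputs of the Andreev function A_n satisfies |{(x,a) : F(x,a) = A_n(x,a)}| ≥ (1/2 + ε) · 2^{M + k·r} (where M, k, r are as in the definition of A_n), then w ≥ c · ε^{2(1-δ)} · n^{1-δ}. -/
/-!
Fix all of the matrix `a` except one column. As `y ∈ {0,1}^k` runs over the values of that column,
the address runs injectively over `N = 2 ^ k ≥ n / 4` positions of `x`, so for uniform `x` the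
target is a uniformly random function of `y`, while the gates become `max 0 (v i y + τ i)`, where
the functions `v i` do not depend on `x` and only the biases `τ i` do.

*Description length.* Describe the restricted circuit by the patterns `P i = {y | 0 ≤ v i y + τ i}`
and then by its set of accepted points. A constant `P i` costs `O(1)`; a mixed one is among at most
`(N + 1) ^ 2` threshold sets, by the Sauer–Shelah lemma. If `s` patterns are mixed, then given all
patterns the circuit is a threshold of a function in a space of dimension `s + 2`, so it accepts one
of at most `(N + 1) ^ (s + 2)` sets. The total correlation of a fixed set with the random target has
moment generating function at most `exp (l² N / 2)`, and a union bound weighted by Kraft's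
inequality shows, for average correlation `A` and `w` gates,
`l N A ≤ l² N / 2 + w log 3 + (3 E[s] + 2) log (N + 1)`.

*Few mixed gates.* Let `R j` be the `ℓ¹`-norm of column `j` of a gate. If the gate is mixed on
column `j`, its affine form lies in an interval of length `2 R j`. Each of the `m` columns `s` with
`R s ≥ R j` has a weight of size at least `R j / k`, so the Littlewood–Offord inequality bounds the
probability of this event by `2 k / √m`. In the order of decreasing `R j` the values of `m` are at
least `1, 2, …, r`, hence for a random column the gate is mixed with probability at most `4 k / √r`.

As `r ≥ k⁴`, this is at most `4 / k`, and the choice `l = A ≥ 2 ε` gives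
`ε² n ≤ 52 w + 8 log₂ n`. The lower bound assumed on `ε` makes the logarithm negligible against
`ε² n`.
-/

/-- `M = ⌊n/2⌋`, the number of `x`-inputs of the Andreev function. -/
def andreevM (n : ℕ) : ℕ := n / 2

/-- `k = ⌊log₂(n/2)⌋`, the number of rows of the matrix input of the Andreev function. -/
def andreevK (n : ℕ) : ℕ := Nat.log 2 (n / 2)

/-- `r = ⌊n/(2k)⌋`, the number of columns of the matrix input of the Andreev function. -/
def andreevR (n : ℕ) : ℕ := n / (2 * andreevK n)

/-- The Andreev function `A_n(x, a) = x_{bin(b₁,…,b_k)}` where `bᵢ` is the parity of the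
`i`-th row of `a` and `bin` reads `b₁,…,b_k` as a binary number (most significant first). -/
def andreev (n : ℕ) (x : Fin (andreevM n) → Bool)
    (a : Fin (andreevK n) → Fin (andreevR n) → Bool) : Prop :=
  let bin : ℕ := ∑ i : Fin (andreevK n),
    if (∑ j : Fin (andreevR n), if a i j then 1 else 0) % 2 = 1
      then 2 ^ (andreevK n - 1 - (i : ℕ)) else 0
  if h : bin < andreevM n then x ⟨bin, h⟩ = true else False

/-- The 0/1 real encoding of a Boolean value. -/
def zo (b : Bool) : ℝ := if b then 1 else 0

section

open Finset
open scoped BigOperators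

/-! ### Uniform probability and resampling -/

open Classical in
/-- The probability of the event `p` under the uniform distribution on `Ω`. -/
noncomputable def uniformProb {Ω : Type*} [Fintype Ω] (p : Ω → Prop) : ℝ :=
  𝔼 ω, if p ω then 1 else 0

/-- The `±1` encoding of a proposition. -/
noncomputable def propSign (p : Prop) : ℝ := open Classical in if p then 1 else -1

section Probability

variable {Ω : Type*} [Fintype Ω]

theorem uniformProb_eq_card_div (p : Ω → Prop) [DecidablePred p] :
    uniformProb p = (#{ω | p ω} : ℝ) / Fintype.card Ω := by
  rw [uniformProb, Fintype.expect_eq_sum_div_card, natCast_card_filter]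
  congr!

theorem uniformProb_mono {p q : Ω → Prop} (h : ∀ ω, p ω → q ω) :
    uniformProb p ≤ uniformProb q := by
  refine expect_le_expect fun ω _ => ?_
  by_cases hp : p ω
  · simp [hp, h ω hp]
  · simp only [hp, if_false]
    positivity

theorem uniformProb_or_le (p q : Ω → Prop) :
    uniformProb (fun ω => p ω ∨ q ω) ≤ uniformProb p + uniformProb q := by
  rw [uniformProb, uniformProb, uniformProb, ← expect_add_distrib]
  refine expect_le_expect fun ω _ => ?_
  by_cases hp : p ω <;> by_cases hq : q ω <;> simp [hp, hq]

theorem expect_propSign [Nonempty Ω] (p : Ω → Prop) :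
    𝔼 ω, propSign (p ω) = 2 * uniformProb p - 1 := by
  rw [uniformProb, mul_expect, ← Fintype.expect_const (ι := Ω) (1 : ℝ), ← expect_sub_distrib]
  refine expect_congr rfl fun ω _ => ?_
  by_cases hp : p ω <;> norm_num [propSign, hp]

theorem expect_extend {ι κ β : Type*} [Fintype ι] [Fintype κ] [Fintype β] [DecidableEq ι]
    [DecidableEq κ] [Nonempty β] {e : κ → ι} (he : Function.Injective e) (f : (ι → β) → ℝ) :
    𝔼 z, 𝔼 y, f (Function.extend e y z) = 𝔼 z, f z := by
  let swap (p : (ι → β) × (κ → β)) : (ι → β) × (κ → β) := (Function.extend e p.2 p.1, p.1 ∘ e)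
  have swap_involutive : Function.Involutive swap := by
    rintro ⟨z, y⟩
    refine Prod.ext (funext fun i => ?_) (Function.extend_comp he y z)
    by_cases hi : ∃ s, e s = i
    · obtain ⟨s, rfl⟩ := hi
      simp [swap, he.extend_apply]
    · simp [swap, Function.extend_apply' _ _ _ hi]
  calc 𝔼 z, 𝔼 y, f (Function.extend e y z)
      = 𝔼 p : (ι → β) × (κ → β), f (Function.extend e p.2 p.1) :=
        (expect_product' univ univ fun z y => f (Function.extend e y z)).symm
    _ = 𝔼 p : (ι → β) × (κ → β), f p.1 :=
        Fintype.expect_equiv swap_involutive.toPerm _ _ fun _ => rfl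
    _ = 𝔼 z, 𝔼 _y : κ → β, f z := expect_product' univ univ fun z _ => f z
    _ = 𝔼 z, f z := by simp only [Fintype.expect_const]

theorem expect_comp_injective {ι κ β : Type*} [Fintype ι] [Fintype κ] [Fintype β] [DecidableEq ι]
    [DecidableEq κ] [Nonempty β] {e : κ → ι} (he : Function.Injective e) (f : (κ → β) → ℝ) :
    𝔼 z : ι → β, f (z ∘ e) = 𝔼 y, f y := by
  rw [← expect_extend he]
  simp only [Function.extend_comp he, Fintype.expect_const]

end Probability

/-! ### The Littlewood–Offord inequality -/

/-- The linear form with weights `α`, evaluated at a Boolean vector. -/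
def linForm {ι : Type*} [Fintype ι] (α : ι → ℝ) (z : ι → Bool) : ℝ := ∑ i, α i * zo (z i)

section LinForm

variable {ι κ : Type*} [Fintype ι] [Fintype κ]

theorem linForm_extend {e : κ → ι} (he : Function.Injective e) (α : ι → ℝ) (y : κ → Bool)
    (z : ι → Bool) :
    linForm α (Function.extend e y z) =
      linForm (α ∘ e) y + linForm α (Function.extend e (fun _ => false) z) := by
  rw [← sub_eq_iff_eq_add, linForm, linForm, linForm, ← sum_sub_distrib]
  refine (Fintype.sum_of_injective e he _ _ (fun i hi => ?_) fun s => ?_).symm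
  · simp [Function.extend_apply' _ _ _ hi]
  · simp [he.extend_apply, zo]

theorem abs_linForm_sub_le (α : ι → ℝ) (y z : ι → Bool) :
    |linForm α y - linForm α z| ≤ ∑ i, |α i| := by
  rw [linForm, linForm, ← sum_sub_distrib]
  refine (abs_sum_le_sum_abs _ _).trans (sum_le_sum fun i _ => ?_)
  cases y i <;> cases z i <;> simp [zo]

theorem abs_linForm_extend_sub_le {e : κ → ι} (he : Function.Injective e) (α : ι → ℝ)
    (y : κ → Bool) (z : ι → Bool) :
    |linForm α (Function.extend e y z) - linForm α z| ≤ ∑ s, |α (e s)| := by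
  have extend_comp_self : Function.extend e (z ∘ e) z = z := by
    funext i
    by_cases hi : ∃ s, e s = i
    · obtain ⟨s, rfl⟩ := hi
      exact he.extend_apply _ _ s
    · exact Function.extend_apply' _ _ _ hi
  nth_rw 2 [← extend_comp_self]
  rw [linForm_extend he α y, linForm_extend he α (z ∘ e), add_sub_add_right_eq_sub]
  exact abs_linForm_sub_le (α ∘ e) y (z ∘ e)

theorem linForm_eq_sum_abs (α : ι → ℝ) (z : ι → Bool) :
    linForm α z = ∑ i, min (α i) 0 + ∑ i with z i = decide (0 ≤ α i), |α i| := by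
  rw [linForm, sum_filter, ← sum_add_distrib]
  refine sum_congr rfl fun i _ => ?_
  rcases le_or_gt 0 (α i) with h | h
  · cases z i <;> simp [zo, h, abs_of_nonneg]
  · cases z i <;> simp [zo, h.not_ge, h.le, abs_of_neg h]

theorem sq_centralBinom_mul_le (q : ℕ) : q.centralBinom ^ 2 * (2 * q + 1) ≤ 4 ^ (2 * q) := by
  induction q with
  | zero => simp
  | succ q ih =>
    refine Nat.le_of_mul_le_mul_left (c := (q + 1) ^ 2) ?_ (by positivity)
    calc (q + 1) ^ 2 * ((q + 1).centralBinom ^ 2 * (2 * (q + 1) + 1))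
        = ((q + 1) * (q + 1).centralBinom) ^ 2 * (2 * q + 3) := by ring
      _ = 4 * (2 * q + 1) * (2 * q + 3) * (q.centralBinom ^ 2 * (2 * q + 1)) := by
          rw [Nat.succ_mul_centralBinom_succ]; ring
      _ ≤ 16 * (q + 1) ^ 2 * 4 ^ (2 * q) := Nat.mul_le_mul (by nlinarith) ih
      _ = (q + 1) ^ 2 * 4 ^ (2 * (q + 1)) := by ring

theorem sq_choose_half_mul_le (m : ℕ) : m.choose (m / 2) ^ 2 * (m + 1) ≤ 4 ^ m := by
  obtain ⟨q, rfl | rfl⟩ := m.even_or_odd'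
  · rw [Nat.mul_div_cancel_left q two_pos, ← Nat.centralBinom_eq_two_mul_choose]
    exact sq_centralBinom_mul_le q
  · have choose_eq : 2 * (2 * q + 1).choose ((2 * q + 1) / 2) = (q + 1).centralBinom := by
      rw [show (2 * q + 1) / 2 = q by omega, Nat.centralBinom_eq_two_mul_choose, mul_add_one,
        Nat.choose_succ_succ, ← Nat.choose_symm_half q, two_mul]
    refine Nat.le_of_mul_le_mul_left (c := 4) ?_ (by positivity)
    calc 4 * ((2 * q + 1).choose ((2 * q + 1) / 2) ^ 2 * (2 * q + 1 + 1))
        = (q + 1).centralBinom ^ 2 * (2 * q + 2) := by rw [← choose_eq]; ring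
      _ ≤ (q + 1).centralBinom ^ 2 * (2 * (q + 1) + 1) := Nat.mul_le_mul_left _ (by omega)
      _ ≤ 4 ^ (2 * (q + 1)) := sq_centralBinom_mul_le (q + 1)
      _ = 4 * 4 ^ (2 * q + 1) := by ring

theorem choose_half_div_two_pow_le (m : ℕ) :
    (m.choose (m / 2) : ℝ) / 2 ^ m ≤ 1 / √(m + 1) := by
  rw [div_le_div_iff₀ (by positivity) (by positivity), one_mul]
  refine abs_le_of_sq_le_sq' ?_ (by positivity) |>.2
  rw [mul_pow, Real.sq_sqrt (by positivity), ← pow_mul, mul_comm m 2, pow_mul,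
    show (2 : ℝ) ^ 2 = 4 by norm_num]
  exact_mod_cast sq_choose_half_mul_le m

/-- Erdős' argument: by `linForm_eq_sum_abs` the form is, up to a constant, a subset sum of weights
of size at least `ρ`, so the subsets that put it in an interval of length `ρ` form an antichain. -/
theorem card_linForm_mem_Ico_le {α : ι → ℝ} {ρ : ℝ} (hα : ∀ i, ρ ≤ |α i|) (θ : ℝ)
    [DecidableEq ι] :
    #{z | linForm α z ∈ Set.Ico θ (θ + ρ)} ≤
      (Fintype.card ι).choose (Fintype.card ι / 2) := by
  let agree (z : ι → Bool) : Finset ι := {i | z i = decide (0 ≤ α i)}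
  have agree_injective : Function.Injective agree := by
    intro y z h
    funext i
    have := Finset.ext_iff.1 h i
    simp only [agree, mem_filter_univ] at this
    by_cases hα : 0 ≤ α i <;> cases hy : y i <;> cases hz : z i <;> simp_all
  rw [← card_image_of_injective _ agree_injective]
  refine IsAntichain.sperner ?_
  simp only [IsAntichain, Set.Pairwise, mem_coe, mem_image, mem_filter_univ]
  rintro _ ⟨y, hy, rfl⟩ _ ⟨z, hz, rfl⟩ hne hsub
  obtain ⟨i, hiz, hiy⟩ := exists_of_ssubset (hsub.ssubset_of_ne hne)
  have gap : ∑ i ∈ insert i (agree y), |α i| ≤ ∑ i ∈ agree z, |α i| :=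
    sum_le_sum_of_subset_of_nonneg (insert_subset hiz hsub) fun _ _ _ => abs_nonneg _
  rw [sum_insert hiy] at gap
  rw [linForm_eq_sum_abs] at hy hz
  linarith [hα i, hy.1, hz.2]

theorem uniformProb_linForm_mem_Ico_le {α : ι → ℝ} {ρ : ℝ} (S : Finset ι)
    (hα : ∀ i ∈ S, ρ ≤ |α i|) (θ : ℝ) [DecidableEq ι] :
    uniformProb (fun z => linForm α z ∈ Set.Ico θ (θ + ρ)) ≤ 1 / √(#S + 1) := by
  let e : S → ι := Subtype.val
  have uniformProb_on_S (θ' : ℝ) :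
      uniformProb (fun y => linForm (α ∘ e) y ∈ Set.Ico θ' (θ' + ρ)) ≤ 1 / √(#S + 1) := by
    have := card_linForm_mem_Ico_le (α := α ∘ e) (fun i => hα i i.2) θ'
    refine le_trans ?_ (choose_half_div_two_pow_le #S)
    rw [uniformProb_eq_card_div]
    simp only [Fintype.card_coe, Fintype.card_fun, Fintype.card_bool, Nat.cast_pow] at this ⊢
    gcongr
    simp
  rw [uniformProb, ← expect_extend (e := e) Subtype.val_injective]
  refine expect_le univ_nonempty fun z _ => ?_
  refine (expect_congr rfl fun y _ => ?_).trans_le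
    (uniformProb_on_S (θ - linForm α (Function.extend e (fun _ => false) z)))
  rw [linForm_extend Subtype.val_injective]
  congr! 1
  simp only [Set.mem_Ico, e]
  constructor <;> rintro ⟨_, _⟩ <;> constructor <;> linarith

theorem littlewood_offord {α : ι → ℝ} {ρ : ℝ} (S : Finset ι) (hα : ∀ i ∈ S, ρ ≤ |α i|) (θ : ℝ)
    (n : ℕ) [DecidableEq ι] :
    uniformProb (fun z => linForm α z ∈ Set.Ico θ (θ + n * ρ)) ≤ n / √(#S + 1) := by
  induction n with
  | zero => simp [uniformProb]
  | succ n ih =>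
    calc uniformProb (fun z => linForm α z ∈ Set.Ico θ (θ + (n + 1 : ℕ) * ρ))
        ≤ uniformProb (fun z => linForm α z ∈ Set.Ico θ (θ + n * ρ) ∨
            linForm α z ∈ Set.Ico (θ + n * ρ) (θ + n * ρ + ρ)) := by
          refine uniformProb_mono fun z hz => ?_
          rw [← Set.mem_union]
          refine Set.Ico_subset_Ico_union_Ico ?_
          rwa [Nat.cast_succ, add_one_mul, ← add_assoc] at hz
      _ ≤ n / √(#S + 1) + 1 / √(#S + 1) :=
          (uniformProb_or_le _ _).trans
            (add_le_add ih (uniformProb_linForm_mem_Ico_le S hα (θ + n * ρ)))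
      _ = (n + 1 : ℕ) / √(#S + 1) := by push_cast; ring

end LinForm

/-! ### Mixed gates are rare -/

/-- A set of points (the active region of a gate) is mixed if it is neither empty nor everything. -/
def IsMixed {Y : Type*} [Fintype Y] (P : Finset Y) : Prop := P.Nonempty ∧ P ≠ univ

/-- The matrix `z` with column `j` replaced by `y`. -/
noncomputable def setColumn {κ σ : Type*} (j : σ) (y : κ → Bool) (z : κ × σ → Bool) :
    κ × σ → Bool :=
  Function.extend (fun i => (i, j)) y z

theorem setColumn_apply_self {κ σ : Type*} (j : σ) (y : κ → Bool) (z : κ × σ → Bool) (i : κ) :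
    setColumn j y z (i, j) = y i :=
  (Prod.mk_left_injective j).extend_apply y z i

theorem setColumn_apply_of_ne {κ σ : Type*} {j s : σ} (h : s ≠ j) (y : κ → Bool)
    (z : κ × σ → Bool) (i : κ) : setColumn j y z (i, s) = z (i, s) :=
  Function.extend_apply' _ _ _ fun ⟨_, h'⟩ => h (congrArg Prod.snd h').symm

/-- The `ℓ¹`-norm of column `j` of a weight matrix. -/
def columnNorm {κ σ : Type*} [Fintype κ] (u : κ × σ → ℝ) (j : σ) : ℝ := ∑ i, |u (i, j)|

/-- The fillings of column `j` of `z` at which the gate with weights `u` and bias `t` has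
nonnegative input. -/
noncomputable def columnPattern {κ σ : Type*} [Fintype κ] [DecidableEq κ] [Fintype σ]
    (u : κ × σ → ℝ) (t : ℝ) (j : σ) (z : κ × σ → Bool) : Finset (κ → Bool) :=
  {y | 0 ≤ linForm u (setColumn j y z) + t}

theorem sum_one_div_sqrt_rank_le {σ : Type*} (R : σ → ℝ) (A : Finset σ) :
    ∑ j ∈ A, 1 / √(#{s ∈ A | R j ≤ R s} + 1) ≤ 2 * √(#A) := by
  classical
  induction A using induction_on_min_value R with
  | empty => simp
  | insert a s ha hmin ih =>
    have rank_min : #{t ∈ insert a s | R a ≤ R t} = #s + 1 := by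
      rw [filter_true_of_mem (by simpa using hmin), card_insert_of_notMem ha]
    have sqrt_step : 1 / √(#s + 1 + 1 : ℝ) + 2 * √(#s) ≤ 2 * √(#s + 1) := by
      have sqrt_mono : √(#s : ℝ) ≤ √(#s + 1) := Real.sqrt_le_sqrt (by linarith)
      have sqrt_mono' : √(#s + 1 : ℝ) ≤ √(#s + 1 + 1) := Real.sqrt_le_sqrt (by linarith)
      have sq := Real.sq_sqrt (show (0 : ℝ) ≤ #s by positivity)
      have sq' := Real.sq_sqrt (show (0 : ℝ) ≤ #s + 1 by positivity)
      rw [← le_sub_iff_add_le, div_le_iff₀ (by positivity)]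
      nlinarith [mul_le_mul_of_nonneg_left sqrt_mono' (sub_nonneg.2 sqrt_mono),
        sq_nonneg (√(#s + 1 : ℝ) - √(#s))]
    rw [sum_insert ha, rank_min, card_insert_of_notMem ha, Nat.cast_succ]
    refine (add_le_add_right ((sum_le_sum fun j _ => ?_).trans ih) _).trans sqrt_step
    gcongr
    exact subset_insert a s

section Mixed

variable {κ σ : Type*} [Fintype κ] [Fintype σ] (u : κ × σ → ℝ) (t : ℝ)

theorem linForm_mem_Ico_of_isMixed {j : σ} [DecidableEq κ] {z : κ × σ → Bool}
    (h : IsMixed (columnPattern u t j z)) :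
    linForm u z ∈ Set.Ico (-t - columnNorm u j) (-t + columnNorm u j) := by
  obtain ⟨⟨y, hy⟩, hne⟩ := h
  obtain ⟨y', hy'⟩ : ∃ y', y' ∉ columnPattern u t j z := by simpa [eq_univ_iff_forall] using hne
  simp only [columnPattern, mem_filter_univ] at hy hy'
  have near (y : κ → Bool) : |linForm u (setColumn j y z) - linForm u z| ≤ columnNorm u j :=
    abs_linForm_extend_sub_le (Prod.mk_left_injective j) u y z
  constructor
  · linarith [abs_le.1 (near y)]
  · linarith [abs_le.1 (near y')]

variable [DecidableEq κ] [DecidableEq σ]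

theorem uniformProb_isMixed_columnPattern_le [Nonempty κ] (j : σ) :
    uniformProb (fun z => IsMixed (columnPattern u t j z)) ≤
      2 * Fintype.card κ / √(#{s | columnNorm u j ≤ columnNorm u s} + 1) := by
  set k := Fintype.card κ
  have hk0 : (k : ℝ) ≠ 0 := by exact_mod_cast Fintype.card_ne_zero
  have exists_large (s : σ) :
      ∃ i, columnNorm u j ≤ columnNorm u s → columnNorm u j / k ≤ |u (i, s)| := by
    obtain ⟨i, -, hi⟩ := exists_le_of_sum_le (f := fun _ => columnNorm u s / k)
      (g := fun i => |u (i, s)|) univ_nonempty (by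
        rw [sum_const, nsmul_eq_mul, card_univ, mul_div_cancel₀ _ hk0, columnNorm])
    exact ⟨i, fun hs => le_trans (by gcongr) hi⟩
  choose i hi using exists_large
  let S : Finset σ := {s | columnNorm u j ≤ columnNorm u s}
  let S' : Finset (κ × σ) := S.map ⟨fun s => (i s, s), fun s s' h => congrArg Prod.snd h⟩
  have large : ∀ p ∈ S', columnNorm u j / k ≤ |u p| :=
    forall_mem_map.2 fun s hs => hi s (mem_filter_univ s |>.1 hs)
  calc uniformProb (fun z => IsMixed (columnPattern u t j z))
      ≤ uniformProb fun z => linForm u z ∈ Set.Ico (-t - columnNorm u j)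
          (-t - columnNorm u j + (2 * k : ℕ) * (columnNorm u j / k)) := by
        refine uniformProb_mono fun z hz => ?_
        convert linForm_mem_Ico_of_isMixed u t hz using 2
        push_cast
        field_simp
        ring
    _ ≤ (2 * k : ℕ) / √(#S' + 1) := littlewood_offord S' large _ _
    _ = 2 * k / √(#S + 1) := by rw [card_map]; push_cast; rfl

theorem expect_uniformProb_isMixed_columnPattern_le [Nonempty κ] :
    𝔼 j, uniformProb (fun z => IsMixed (columnPattern u t j z)) ≤
      4 * Fintype.card κ / √(Fintype.card σ) := by
  calc 𝔼 j, uniformProb (fun z => IsMixed (columnPattern u t j z))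
      ≤ 𝔼 j, 2 * Fintype.card κ / √(#{s | columnNorm u j ≤ columnNorm u s} + 1) :=
        expect_le_expect fun j _ => uniformProb_isMixed_columnPattern_le u t j
    _ = 2 * Fintype.card κ *
          (∑ j, 1 / √(#{s | columnNorm u j ≤ columnNorm u s} + 1)) / Fintype.card σ := by
        rw [Fintype.expect_eq_sum_div_card, mul_sum]
        simp only [mul_one_div]
    _ ≤ 2 * Fintype.card κ * (2 * √(Fintype.card σ)) / Fintype.card σ := by
        gcongr
        exact sum_one_div_sqrt_rank_le (columnNorm u) univ
    _ = 4 * Fintype.card κ * (√(Fintype.card σ) / Fintype.card σ) := by ring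
    _ = 4 * Fintype.card κ / √(Fintype.card σ) := by rw [Real.sqrt_div_self', mul_one_div]

end Mixed

/-! ### Counting thresholds -/

section Threshold

variable {Y D : Type*} [Fintype D] {h : D → Y → ℝ} {𝒜 : Finset (Finset Y)}

/-- If more than `card D` points were shattered, a linear dependence among the evaluations at them,
with a negative coefficient somewhere, would exclude the pattern of its nonnegative coefficients. -/
theorem vcDim_threshold_family_le [DecidableEq Y]
    (h𝒜 : ∀ A ∈ 𝒜, ∃ θ : D → ℝ, ∀ y, y ∈ A ↔ 0 ≤ ∑ d, θ d * h d y) :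
    𝒜.vcDim ≤ Fintype.card D := by
  refine Finset.sup_le fun S hS => ?_
  by_contra! card_lt
  have dependent : ¬LinearIndepOn ℝ (fun y d => h d y) (S : Set Y) := fun li => by
    have := LinearIndependent.fintype_card_le_finrank li
    rw [Module.finrank_fintype_fun_eq_card] at this
    exact card_lt.not_ge (by simpa using this)
  obtain ⟨g, g_dep, y₀, hy₀, g_neg⟩ : ∃ g : Y → ℝ,
      (∀ d, ∑ y ∈ S, g y * h d y = 0) ∧ ∃ y ∈ S, g y < 0 := by
    obtain ⟨g, g_dep, y₀, hy₀, g_ne⟩ := not_linearIndepOn_finset_iff.1 dependent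
    replace g_dep (d : D) : ∑ y ∈ S, g y * h d y = 0 := by
      simpa [Finset.sum_apply] using congrFun g_dep d
    rcases g_ne.lt_or_gt with g_neg | g_pos
    · exact ⟨g, g_dep, y₀, hy₀, g_neg⟩
    · exact ⟨-g, by simpa using g_dep, y₀, hy₀, by simpa using g_pos⟩
  obtain ⟨A, hA, trace_eq⟩ := mem_shatterer.1 hS (filter_subset (fun y => 0 ≤ g y) S)
  obtain ⟨θ, hθ⟩ := h𝒜 A hA
  have sign_iff {y : Y} (hy : y ∈ S) : 0 ≤ ∑ d, θ d * h d y ↔ 0 ≤ g y := by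
    have := Finset.ext_iff.1 trace_eq y
    simpa only [mem_inter, mem_filter, hy, true_and, hθ] using this
  have eq_zero : ∑ y ∈ S, g y * ∑ d, θ d * h d y = 0 := by
    calc ∑ y ∈ S, g y * ∑ d, θ d * h d y
        = ∑ d, θ d * ∑ y ∈ S, g y * h d y := by
          simp only [mul_sum]
          rw [sum_comm]
          exact sum_congr rfl fun d _ => sum_congr rfl fun y _ => mul_left_comm _ _ _
      _ = 0 := by simp [g_dep]
  have pos_of_neg {y : Y} (hy : y ∈ S) (hg : g y < 0) : 0 < g y * ∑ d, θ d * h d y :=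
    mul_pos_of_neg_of_neg hg (not_le.1 ((sign_iff hy).not.2 hg.not_ge))
  refine eq_zero.not_gt (sum_pos' (fun y hy => ?_) ⟨y₀, hy₀, pos_of_neg hy₀ g_neg⟩)
  rcases le_or_gt 0 (g y) with hg | hg
  · exact mul_nonneg hg ((sign_iff hy).2 hg)
  · exact (pos_of_neg hy hg).le

theorem sum_choose_le_pow (n d : ℕ) : ∑ i ∈ range (d + 1), n.choose i ≤ (n + 1) ^ d := by
  rw [add_pow]
  refine sum_le_sum fun i hi => ?_
  calc n.choose i ≤ n ^ i := Nat.choose_le_pow n i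
    _ ≤ n ^ i * 1 ^ (d - i) * d.choose i := by
      rw [one_pow, mul_one]
      exact Nat.le_mul_of_pos_right _ (Nat.choose_pos (mem_range_succ_iff.1 hi))

theorem card_threshold_family_le [Fintype Y]
    (h𝒜 : ∀ A ∈ 𝒜, ∃ θ : D → ℝ, ∀ y, y ∈ A ↔ 0 ≤ ∑ d, θ d * h d y) :
    #𝒜 ≤ (Fintype.card Y + 1) ^ Fintype.card D := by
  classical
  calc #𝒜 ≤ #𝒜.shatterer := card_le_card_shatterer 𝒜
    _ ≤ ∑ i ∈ Iic 𝒜.vcDim, (Fintype.card Y).choose i := card_shatterer_le_sum_vcDim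
    _ ≤ ∑ i ∈ range (Fintype.card D + 1), (Fintype.card Y).choose i :=
        sum_le_sum_of_subset fun _ hi => mem_range_succ_iff.2
          ((mem_Iic.1 hi).trans (vcDim_threshold_family_le h𝒜))
    _ ≤ (Fintype.card Y + 1) ^ Fintype.card D := sum_choose_le_pow _ _

end Threshold

/-- The LTF-of-ReLU circuit with output weights `c₀` and `c` accepts when its gates receive the
inputs `g`. -/
def ReluAccepts {ι : Type*} [Fintype ι] (c₀ : ℝ) (c g : ι → ℝ) : Prop :=
  0 ≤ c₀ + ∑ i, c i * max 0 (g i)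

section Patterns

variable {Y ι : Type*} [Fintype Y] [Fintype ι]

/-- The points at which a ReLU gate with linear part `v` and bias `τ` has nonnegative input. -/
noncomputable def gatePattern (v : Y → ℝ) (τ : ℝ) : Finset Y := {y | 0 ≤ v y + τ}

open Classical in
/-- The points accepted by the circuit whose gates have linear parts `v i` and biases `τ i`. The
`v i` are arbitrary functions, as only the dependence on the biases is counted. -/
noncomputable def acceptedSet (c₀ : ℝ) (c : ι → ℝ) (v : ι → Y → ℝ) (τ : ι → ℝ) : Finset Y :=
  {y | ReluAccepts c₀ c fun i => v i y + τ i}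

open Classical in
/-- The number of mixed patterns among those of the gates. -/
noncomputable def numMixed (P : ι → Finset Y) : ℕ := #{i | IsMixed (P i)}

open Classical in
/-- All patterns of a gate with linear part `v`, over all biases. -/
noncomputable def gatePatterns (v : Y → ℝ) : Finset (Finset Y) := {P | ∃ τ, gatePattern v τ = P}

open Classical in
/-- All sets accepted by the circuit, over all biases that produce the gate patterns `P`. -/
noncomputable def acceptedSets (c₀ : ℝ) (c : ι → ℝ) (v : ι → Y → ℝ) (P : ι → Finset Y) :
    Finset (Finset Y) :=
  {H | ∃ τ : ι → ℝ, (∀ i, gatePattern (v i) (τ i) = P i) ∧ acceptedSet c₀ c v τ = H}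

theorem card_gatePatterns_le (v : Y → ℝ) : #(gatePatterns v) ≤ (Fintype.card Y + 1) ^ 2 := by
  classical
  refine (card_threshold_family_le (h := ![v, 1]) fun P hP => ?_).trans_eq
    (by rw [Fintype.card_fin])
  obtain ⟨τ, rfl⟩ := (mem_filter_univ P).1 hP
  exact ⟨![1, τ], fun y => by simp [gatePattern]⟩

open Classical in
theorem mul_max_zero_eq_of_gatePattern_eq {v : Y → ℝ} {τ : ℝ} {P : Finset Y}
    (hP : gatePattern v τ = P) (a : ℝ) (y : Y) :
    a * max 0 (v y + τ) =
      (if IsMixed P then τ * (a * if y ∈ P then 1 else 0) else 0) +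
        (a * if y ∈ P then v y else 0) + (if P = univ then a * τ else 0) := by
  have mem_iff : y ∈ P ↔ 0 ≤ v y + τ := hP ▸ mem_filter_univ y
  by_cases hy : y ∈ P
  · have hne : P.Nonempty := ⟨y, hy⟩
    rw [max_eq_right (mem_iff.1 hy)]
    by_cases huniv : P = univ <;> simp [IsMixed, hy, huniv, hne] <;> ring
  · have huniv : P ≠ univ := fun h => hy (h ▸ mem_univ y)
    rw [max_eq_left (not_le.1 (mem_iff.not.1 hy)).le]
    simp [hy, huniv]

/-- For given patterns, a gate that is constantly off contributes nothing, the bias of a gate that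
is constantly on only changes the constant term, and the bias of a mixed gate `i` multiplies the
fixed function `c i * 1_{P i}`. -/
theorem card_acceptedSets_le (c₀ : ℝ) (c : ι → ℝ) (v : ι → Y → ℝ) (P : ι → Finset Y) :
    #(acceptedSets c₀ c v P) ≤ (Fintype.card Y + 1) ^ (numMixed P + 2) := by
  classical
  let h : {i // IsMixed (P i)} ⊕ Fin 2 → Y → ℝ :=
    Sum.elim (fun i y => c i * if y ∈ P i then 1 else 0)
      ![fun y => ∑ i, c i * if y ∈ P i then v i y else 0, 1]
  refine (card_threshold_family_le (h := h) fun H hH => ?_).trans_eq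
    (by simp [numMixed, Fintype.card_subtype])
  obtain ⟨τ, hP, rfl⟩ := (mem_filter_univ H).1 hH
  refine ⟨Sum.elim (fun i => τ i) ![1, c₀ + ∑ i, if P i = univ then c i * τ i else 0],
    fun y => ?_⟩
  have sum_mixed : ∑ i : {i // IsMixed (P i)}, τ i * (c i * if y ∈ P i then 1 else 0) =
      ∑ i, if IsMixed (P i) then τ i * (c i * if y ∈ P i then 1 else 0) else 0 := by
    rw [← sum_filter]
    exact (sum_subtype {i | IsMixed (P i)} (fun i => mem_filter_univ i)
      fun i => τ i * (c i * if y ∈ P i then 1 else 0)).symm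
  have gate_eq (i : ι) := mul_max_zero_eq_of_gatePattern_eq (hP i) (c i) y
  rw [acceptedSet, mem_filter_univ, ReluAccepts, Fintype.sum_sum_type, Fin.sum_univ_two]
  simp only [h, Sum.elim_inl, Sum.elim_inr, Matrix.cons_val_zero, Matrix.cons_val_one,
    Pi.one_apply, one_mul, mul_one, sum_mixed, gate_eq, sum_add_distrib]
  rw [iff_iff_eq]
  congr 1
  ring

end Patterns

/-! ### Description length -/

theorem expect_le_expect_codeLength {Ω Γ : Type*} [Fintype Ω] [Nonempty Ω] {𝒞 : Finset Γ}
    {ℓ : Γ → ℝ} (kraft : ∑ γ ∈ 𝒞, Real.exp (-ℓ γ) ≤ 1) {Z : Γ → Ω → ℝ}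
    (hZ : ∀ γ ∈ 𝒞, 𝔼 ω, Real.exp (Z γ ω) ≤ 1) {γ : Ω → Γ} (hγ : ∀ ω, γ ω ∈ 𝒞) :
    𝔼 ω, Z (γ ω) ω ≤ 𝔼 ω, ℓ (γ ω) := by
  rw [← sub_nonpos, ← expect_sub_distrib]
  calc 𝔼 ω, (Z (γ ω) ω - ℓ (γ ω))
      ≤ 𝔼 ω, (∑ c ∈ 𝒞, Real.exp (-ℓ c) * Real.exp (Z c ω) - 1) := by
        refine expect_le_expect fun ω _ => ?_
        have exp_le_sum : Real.exp (-ℓ (γ ω)) * Real.exp (Z (γ ω) ω) ≤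
            ∑ c ∈ 𝒞, Real.exp (-ℓ c) * Real.exp (Z c ω) :=
          single_le_sum (f := fun c => Real.exp (-ℓ c) * Real.exp (Z c ω))
            (fun _ _ => by positivity) (hγ ω)
        rw [← Real.exp_add, neg_add_eq_sub] at exp_le_sum
        linarith [Real.add_one_le_exp (Z (γ ω) ω - ℓ (γ ω))]
    _ = ∑ c ∈ 𝒞, Real.exp (-ℓ c) * 𝔼 ω, Real.exp (Z c ω) - 1 := by
        simp only [expect_sub_distrib, expect_sum_comm, mul_expect, Fintype.expect_const]
    _ ≤ ∑ c ∈ 𝒞, Real.exp (-ℓ c) - 1 := by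
        gcongr with c hc
        exact mul_le_of_le_one_right (Real.exp_pos _).le (hZ c hc)
    _ ≤ 0 := sub_nonpos.2 kraft

theorem expect_exp_mul_sum_propSign_le {Y : Type*} [Fintype Y] [DecidableEq Y] (A : Finset Y)
    (l : ℝ) :
    𝔼 b : Y → Bool, Real.exp (l * ∑ y, propSign (y ∈ A ↔ b y)) ≤
      Real.exp (l ^ 2 * Fintype.card Y / 2) := by
  have expect_bit (p : Prop) :
      (∑ b : Bool, Real.exp (l * propSign (p ↔ b))) / 2 ≤ Real.exp (l ^ 2 / 2) := by
    refine le_of_eq_of_le ?_ (Real.cosh_le_exp_half_sq l)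
    rw [Real.cosh_eq]
    by_cases hp : p <;> simp [propSign, hp, add_comm]
  calc 𝔼 b : Y → Bool, Real.exp (l * ∑ y, propSign (y ∈ A ↔ b y))
      = ∏ y, (∑ b : Bool, Real.exp (l * propSign (y ∈ A ↔ b))) / 2 := by
        rw [Fintype.expect_eq_sum_div_card, prod_div_distrib, Fintype.prod_sum]
        simp [mul_sum, Real.exp_sum]
    _ ≤ ∏ _y : Y, Real.exp (l ^ 2 / 2) :=
        prod_le_prod (fun _ _ => by positivity) fun y _ => expect_bit (y ∈ A)
    _ = Real.exp (l ^ 2 * Fintype.card Y / 2) := by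
        rw [prod_const, ← Real.exp_nat_mul, card_univ]
        ring_nf

section Length

variable {Y ι : Type*} [Fintype Y] [Fintype ι]

open Classical in
/-- The length (in nats) of a code word for the pattern `P` of one gate: a choice between empty,
everything and mixed, followed in the last case by one of at most `(card Y + 1) ^ 2` patterns. -/
noncomputable def patternLength (P : Finset Y) : ℝ :=
  Real.log 3 + if IsMixed P then 2 * Real.log (Fintype.card Y + 1) else 0

/-- The length (in nats) of a code word for the set accepted by a circuit with gate patterns `P`:
the patterns, followed by one of at most `(card Y + 1) ^ (numMixed P + 2)` accepted sets. -/
noncomputable def circuitLength (P : ι → Finset Y) : ℝ :=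
  ∑ i, patternLength (P i) + (numMixed P + 2) * Real.log (Fintype.card Y + 1)

theorem circuitLength_eq (P : ι → Finset Y) :
    circuitLength P =
      Fintype.card ι * Real.log 3 + (3 * numMixed P + 2) * Real.log (Fintype.card Y + 1) := by
  simp only [circuitLength, patternLength, sum_add_distrib, ← sum_filter, sum_const, card_univ,
    nsmul_eq_mul, numMixed]
  ring

open Classical in
theorem exp_neg_patternLength (P : Finset Y) :
    Real.exp (-patternLength P) =
      1 / 3 * if IsMixed P then (((Fintype.card Y : ℝ) + 1) ^ 2)⁻¹ else 1 := by
  rw [patternLength, neg_add, Real.exp_add, Real.exp_neg, Real.exp_log three_pos, one_div]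
  split_ifs
  · rw [Real.exp_neg, two_mul, Real.exp_add, Real.exp_log (by positivity), sq]
  · simp

theorem sum_exp_neg_patternLength_le (v : Y → ℝ) :
    ∑ P ∈ gatePatterns v, Real.exp (-patternLength P) ≤ 1 := by
  classical
  obtain ⟨K, hK⟩ : ∃ K : ℝ, ((Fintype.card Y : ℝ) + 1) ^ 2 = K := ⟨_, rfl⟩
  have K_pos : 0 < K := hK ▸ by positivity
  have exp_le (P : Finset Y) : Real.exp (-patternLength P) ≤
      1 / 3 * K⁻¹ + ((if P = ∅ then 1 / 3 else 0) + if P = univ then 1 / 3 else 0) := by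
    have : 0 < K⁻¹ := inv_pos.2 K_pos
    have mixed_or : IsMixed P ∨ P = ∅ ∨ P = univ := by
      rw [IsMixed, nonempty_iff_ne_empty]
      tauto
    rw [exp_neg_patternLength, hK]
    split_ifs <;> first | linarith | tauto
  have sum_indicator_le (Q : Finset Y) :
      ∑ P ∈ gatePatterns v, (if P = Q then (1 / 3 : ℝ) else 0) ≤ 1 / 3 := by
    rw [sum_ite_eq']
    split_ifs <;> norm_num
  have card_le : (#(gatePatterns v) : ℝ) ≤ K := by
    rw [← hK]
    exact_mod_cast card_gatePatterns_le v
  calc ∑ P ∈ gatePatterns v, Real.exp (-patternLength P)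
      ≤ #(gatePatterns v) * (1 / 3 * K⁻¹) + (1 / 3 + 1 / 3) := by
        refine (sum_le_sum fun P _ => exp_le P).trans ?_
        rw [sum_add_distrib, sum_add_distrib, sum_const, nsmul_eq_mul]
        gcongr <;> exact sum_indicator_le _
    _ ≤ K * (1 / 3 * K⁻¹) + (1 / 3 + 1 / 3) := by gcongr
    _ = 1 := by field_simp; norm_num

theorem sum_exp_neg_circuitLength_le [DecidableEq ι] (c₀ : ℝ) (c : ι → ℝ) (v : ι → Y → ℝ) :
    ∑ γ ∈ (Fintype.piFinset fun i => gatePatterns (v i)).sigma (acceptedSets c₀ c v),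
      Real.exp (-circuitLength γ.1) ≤ 1 := by
  rw [sum_sigma]
  calc ∑ P ∈ Fintype.piFinset fun i => gatePatterns (v i), ∑ _H ∈ acceptedSets c₀ c v P,
        Real.exp (-circuitLength P)
      ≤ ∑ P ∈ Fintype.piFinset fun i => gatePatterns (v i),
          ∏ i, Real.exp (-patternLength (P i)) := by
        refine sum_le_sum fun P _ => ?_
        rw [sum_const, nsmul_eq_mul, circuitLength, neg_add, Real.exp_add, ← sum_neg_distrib,
          Real.exp_sum, mul_left_comm]
        refine mul_le_of_le_one_right (by positivity) ?_
        rw [Real.exp_neg, ← div_eq_mul_inv, div_le_one (Real.exp_pos _)]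
        have := card_acceptedSets_le c₀ c v P
        rw [← Nat.cast_ofNat (R := ℝ), ← Nat.cast_add, Real.exp_nat_mul,
          Real.exp_log (by positivity)]
        exact_mod_cast this
    _ = ∏ i, ∑ P ∈ gatePatterns (v i), Real.exp (-patternLength P) :=
        (prod_univ_sum (fun i => gatePatterns (v i)) fun _ P => Real.exp (-patternLength P)).symm
    _ ≤ 1 := prod_le_one (fun i _ => by positivity) fun i _ => sum_exp_neg_patternLength_le (v i)

theorem mul_expect_sum_propSign_le {X : Type*} [Fintype X] [DecidableEq X] {idx : Y → X}
    (hidx : Function.Injective idx) (c₀ : ℝ) (c : ι → ℝ) (v : ι → Y → ℝ)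
    (τ : (X → Bool) → ι → ℝ) (l : ℝ) :
    l * 𝔼 x, ∑ y, propSign (y ∈ acceptedSet c₀ c v (τ x) ↔ x (idx y)) ≤
      𝔼 x, circuitLength (fun i => gatePattern (v i) (τ x i)) + l ^ 2 * Fintype.card Y / 2 := by
  classical
  let Z (γ : Σ _ : ι → Finset Y, Finset Y) (x : X → Bool) : ℝ :=
    l * ∑ y, propSign (y ∈ γ.2 ↔ x (idx y)) - l ^ 2 * Fintype.card Y / 2
  have expect_exp_le_one (γ : Σ _ : ι → Finset Y, Finset Y) : 𝔼 x, Real.exp (Z γ x) ≤ 1 := by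
    simp only [Z, Real.exp_sub, ← expect_div]
    rw [div_le_one (Real.exp_pos _)]
    refine le_of_eq_of_le ?_ (expect_exp_mul_sum_propSign_le γ.2 l)
    exact expect_comp_injective hidx fun b : Y → Bool =>
      Real.exp (l * ∑ y, propSign (y ∈ γ.2 ↔ b y))
  let γ (x : X → Bool) : Σ _ : ι → Finset Y, Finset Y :=
    ⟨fun i => gatePattern (v i) (τ x i), acceptedSet c₀ c v (τ x)⟩
  have γ_mem (x : X → Bool) :
      γ x ∈ (Fintype.piFinset fun i => gatePatterns (v i)).sigma (acceptedSets c₀ c v) := by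
    simp only [γ, mem_sigma, Fintype.mem_piFinset, gatePatterns, acceptedSets, mem_filter_univ]
    exact ⟨fun i => ⟨τ x i, rfl⟩, τ x, fun i => rfl, rfl⟩
  have := expect_le_expect_codeLength (sum_exp_neg_circuitLength_le c₀ c v)
    (fun γ _ => expect_exp_le_one γ) γ_mem
  simp only [Z, γ, expect_sub_distrib, ← mul_expect, Fintype.expect_const] at this
  linarith

end Length

/-! ### Correlation with an addressed bit -/

section Correlation

variable {κ σ ι X : Type*} [Fintype κ] [Fintype σ] [Fintype ι] [Fintype X]

theorem linForm_setColumn (u : κ × σ → ℝ) (j : σ) (y : κ → Bool) (z : κ × σ → Bool) :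
    linForm u (setColumn j y z) =
      linForm (fun i => u (i, j)) y + linForm u (setColumn j (fun _ => false) z) :=
  linForm_extend (Prod.mk_left_injective j) u y z

variable [DecidableEq κ]

theorem mul_expect_column_propSign_le [DecidableEq X] {adr : (κ × σ → Bool) → X} {j : σ}
    {z : κ × σ → Bool} (hadr : Function.Injective fun y => adr (setColumn j y z)) (c₀ : ℝ)
    (c : ι → ℝ) (u : ι → κ × σ → ℝ) (t : ι → (X → Bool) → ℝ) (l : ℝ) :
    l * 2 ^ Fintype.card κ * 𝔼 x, 𝔼 y, propSign
        (ReluAccepts c₀ c (fun i => linForm (u i) (setColumn j y z) + t i x) ↔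
          x (adr (setColumn j y z))) ≤
      𝔼 x, circuitLength (fun i => columnPattern (u i) (t i x) j z) +
        l ^ 2 * 2 ^ Fintype.card κ / 2 := by
  let v (i : ι) (y : κ → Bool) : ℝ := linForm (fun s => u i (s, j)) y
  let τ (x : X → Bool) (i : ι) : ℝ := linForm (u i) (setColumn j (fun _ => false) z) + t i x
  have input_eq (x : X → Bool) (y : κ → Bool) (i : ι) :
      linForm (u i) (setColumn j y z) + t i x = v i y + τ x i := by
    rw [linForm_setColumn, add_assoc]
  have pattern_eq (x : X → Bool) (i : ι) :
      columnPattern (u i) (t i x) j z = gatePattern (v i) (τ x i) := by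
    simp only [columnPattern, gatePattern, input_eq]
  have mem_iff (x : X → Bool) (y : κ → Bool) :
      y ∈ acceptedSet c₀ c v (τ x) ↔ ReluAccepts c₀ c fun i => v i y + τ x i := by
    simp [acceptedSet]
  have := mul_expect_sum_propSign_le hadr c₀ c v τ l
  simp only [mem_iff, Fintype.card_fun, Fintype.card_bool, Nat.cast_pow, Nat.cast_ofNat] at this
  simp only [input_eq, pattern_eq]
  refine le_of_eq_of_le ?_ this
  simp only [Fintype.expect_eq_sum_div_card (ι := κ → Bool), Fintype.card_fun, Fintype.card_bool,
    Nat.cast_pow, Nat.cast_ofNat, ← expect_div]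
  field_simp

variable [DecidableEq σ]

theorem expect_expect_setColumn [Nonempty σ] (f : (κ × σ → Bool) → ℝ) :
    𝔼 j, 𝔼 z, 𝔼 y, f (setColumn j y z) = 𝔼 z, f z :=
  (expect_congr rfl fun j _ => expect_extend (Prod.mk_left_injective j) f).trans
    (Fintype.expect_const _)

theorem expect_numMixed_columnPattern_le [Nonempty κ] (u : ι → κ × σ → ℝ) (t : ι → ℝ) :
    𝔼 j, 𝔼 z, (numMixed (fun i => columnPattern (u i) (t i) j z) : ℝ) ≤
      Fintype.card ι * (4 * Fintype.card κ / √(Fintype.card σ)) := by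
  calc 𝔼 j, 𝔼 z, (numMixed (fun i => columnPattern (u i) (t i) j z) : ℝ)
      = ∑ i, 𝔼 j, uniformProb (fun z => IsMixed (columnPattern (u i) (t i) j z)) := by
        simp only [numMixed, natCast_card_filter, uniformProb, expect_sum_comm]
    _ ≤ ∑ _i : ι, 4 * Fintype.card κ / √(Fintype.card σ) :=
        sum_le_sum fun i _ => expect_uniformProb_isMixed_columnPattern_le (u i) (t i)
    _ = Fintype.card ι * (4 * Fintype.card κ / √(Fintype.card σ)) := by
        rw [sum_const, card_univ, nsmul_eq_mul]

theorem expect_circuitLength_columnPattern_le [Nonempty κ] [Nonempty σ] (u : ι → κ × σ → ℝ)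
    (t : ι → ℝ) :
    𝔼 j, 𝔼 z, circuitLength (fun i => columnPattern (u i) (t i) j z) ≤
      Fintype.card ι * Real.log 3 +
        (3 * (Fintype.card ι * (4 * Fintype.card κ / √(Fintype.card σ))) + 2) *
          Real.log (2 ^ Fintype.card κ + 1) := by
  simp only [circuitLength_eq, expect_add_distrib, ← expect_mul, ← mul_expect,
    Fintype.expect_const, Fintype.card_fun, Fintype.card_bool, Nat.cast_pow, Nat.cast_ofNat]
  have : 0 ≤ Real.log ((2 : ℝ) ^ Fintype.card κ + 1) := Real.log_nonneg (by simp)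
  gcongr
  exact expect_numMixed_columnPattern_le u t

/-- Conditioned on everything but a random column, the circuit has few descriptions on average, and
a set correlating with random bits to degree `A` needs a description of length `A ^ 2 * N / 2`. -/
theorem sq_correlation_le [DecidableEq X] [Nonempty κ] [Nonempty σ] {adr : (κ × σ → Bool) → X}
    (hadr : ∀ j z, Function.Injective fun y => adr (setColumn j y z)) (c₀ : ℝ) (c : ι → ℝ)
    (u : ι → κ × σ → ℝ) (t : ι → (X → Bool) → ℝ) :
    (𝔼 x, 𝔼 z, propSign (ReluAccepts c₀ c (fun i => linForm (u i) z + t i x) ↔ x (adr z))) ^ 2 *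
        2 ^ Fintype.card κ / 2 ≤
      Fintype.card ι * Real.log 3 +
        (3 * (Fintype.card ι * (4 * Fintype.card κ / √(Fintype.card σ))) + 2) *
          Real.log (2 ^ Fintype.card κ + 1) := by
  let agree (x : X → Bool) (z : κ × σ → Bool) : ℝ :=
    propSign (ReluAccepts c₀ c (fun i => linForm (u i) z + t i x) ↔ x (adr z))
  obtain ⟨A, hA⟩ : ∃ A, 𝔼 x, 𝔼 z, agree x z = A := ⟨_, rfl⟩
  obtain ⟨N, hN⟩ : ∃ N : ℝ, 2 ^ Fintype.card κ = N := ⟨_, rfl⟩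
  have rotate (f : (X → Bool) → σ → (κ × σ → Bool) → ℝ) :
      𝔼 j, 𝔼 z, 𝔼 x, f x j z = 𝔼 x, 𝔼 j, 𝔼 z, f x j z := by
    rw [expect_comm univ univ fun x j => 𝔼 z, f x j z]
    exact expect_congr rfl fun j _ => expect_comm _ _ _
  have A_eq : 𝔼 j, 𝔼 z, 𝔼 x, 𝔼 y, agree x (setColumn j y z) = A := by
    rw [rotate fun x j z => 𝔼 y, agree x (setColumn j y z), ← hA]
    exact expect_congr rfl fun x _ => expect_expect_setColumn (agree x)
  obtain ⟨B, hB⟩ : ∃ B, Fintype.card ι * Real.log 3 +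
      (3 * (Fintype.card ι * (4 * Fintype.card κ / √(Fintype.card σ))) + 2) *
        Real.log (2 ^ Fintype.card κ + 1) = B := ⟨_, rfl⟩
  have length_le (x : X → Bool) :
      𝔼 j, 𝔼 z, circuitLength (fun i => columnPattern (u i) (t i x) j z) ≤ B :=
    (expect_circuitLength_columnPattern_le u fun i => t i x).trans_eq hB
  have : A * N * A ≤ B + A ^ 2 * N / 2 := by
    calc A * N * A
        = 𝔼 j, 𝔼 z, A * N * 𝔼 x, 𝔼 y, agree x (setColumn j y z) := by
          simp only [← mul_expect, A_eq]
      _ ≤ 𝔼 j, 𝔼 z, (𝔼 x, circuitLength (fun i => columnPattern (u i) (t i x) j z) +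
            A ^ 2 * N / 2) := by
          refine expect_le_expect fun j _ => expect_le_expect fun z _ => ?_
          rw [← hN]
          exact mul_expect_column_propSign_le (hadr j z) c₀ c u t A
      _ = 𝔼 x, 𝔼 j, 𝔼 z, circuitLength (fun i => columnPattern (u i) (t i x) j z) +
            A ^ 2 * N / 2 := by
          simp only [expect_add_distrib, Fintype.expect_const]
          rw [rotate fun x j z => circuitLength fun i => columnPattern (u i) (t i x) j z]
      _ ≤ B + A ^ 2 * N / 2 := by
          gcongr
          exact expect_le univ_nonempty fun x _ => length_le x
  rw [hA, hB, hN]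
  linarith

/-- The choice `κ ^ 4 ≤ σ` makes up for the factor `κ` by which describing a mixed gate is more
expensive than describing a constant one. -/
theorem sq_correlation_le_of_card_pow_four_le [DecidableEq X] [Nonempty κ]
    (hσ : Fintype.card κ ^ 4 ≤ Fintype.card σ) {adr : (κ × σ → Bool) → X}
    (hadr : ∀ j z, Function.Injective fun y => adr (setColumn j y z)) (c₀ : ℝ) (c : ι → ℝ)
    (u : ι → κ × σ → ℝ) (t : ι → (X → Bool) → ℝ) :
    (𝔼 x, 𝔼 z, propSign (ReluAccepts c₀ c (fun i => linForm (u i) z + t i x) ↔ x (adr z))) ^ 2 *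
        2 ^ Fintype.card κ ≤
      52 * Fintype.card ι + 8 * Fintype.card κ := by
  have hκ : 0 < Fintype.card κ := Fintype.card_pos
  have : Nonempty σ := Fintype.card_pos_iff.1 ((pow_pos hκ 4).trans_le hσ)
  have log_three_le : Real.log 3 ≤ 2 := by linarith [Real.log_le_sub_one_of_pos three_pos]
  have log_le : Real.log (2 ^ Fintype.card κ + 1) ≤ 2 * Fintype.card κ := by
    calc Real.log (2 ^ Fintype.card κ + 1)
        ≤ Real.log ((2 ^ Fintype.card κ) ^ 2) := by
          refine Real.log_le_log (by positivity) ?_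
          have : (2 : ℝ) ≤ 2 ^ Fintype.card κ := le_self_pow₀ one_le_two hκ.ne'
          nlinarith
      _ = 2 * Fintype.card κ * Real.log 2 := by
          rw [Real.log_pow, Real.log_pow, Nat.cast_ofNat, mul_assoc]
      _ ≤ 2 * Fintype.card κ := mul_le_of_le_one_right (by positivity)
          (by linarith [Real.log_le_sub_one_of_pos two_pos])
  have mixed_le : 4 * Fintype.card κ / √(Fintype.card σ) ≤ 4 / (Fintype.card κ : ℝ) := by
    have : (Fintype.card κ : ℝ) ^ 2 ≤ √(Fintype.card σ) :=
      Real.le_sqrt_of_sq_le (by rw [← pow_mul]; exact_mod_cast hσ)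
    rw [div_le_div_iff₀ (by positivity) (by positivity)]
    linarith
  have log_nonneg : 0 ≤ Real.log ((2 : ℝ) ^ Fintype.card κ + 1) := Real.log_nonneg (by simp)
  have := sq_correlation_le hadr c₀ c u t
  have length_le : Fintype.card ι * Real.log 3 +
      (3 * (Fintype.card ι * (4 * Fintype.card κ / √(Fintype.card σ))) + 2) *
        Real.log (2 ^ Fintype.card κ + 1) ≤ 26 * Fintype.card ι + 4 * Fintype.card κ := by
    calc _ ≤ Fintype.card ι * 2 + (3 * (Fintype.card ι * (4 / (Fintype.card κ : ℝ))) + 2) *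
            (2 * Fintype.card κ) := by gcongr
      _ = 26 * Fintype.card ι + 4 * Fintype.card κ := by field
  linarith

end Correlation

/-! ### The address read by the Andreev function -/

section Address

/-- The number whose binary digits, most significant first, are `1` exactly at the positions in
`B`. -/
def binaryValue {k : ℕ} (B : Finset (Fin k)) : ℕ := ∑ i ∈ B, 2 ^ (k - 1 - (i : ℕ))

theorem binaryValue_eq_sum_map {k : ℕ} (B : Finset (Fin k)) :
    binaryValue B = ∑ m ∈ B.map (Fin.revPerm.toEmbedding.trans Fin.valEmbedding), 2 ^ m := by
  simp [binaryValue, Fin.val_rev, Nat.sub_sub, add_comm]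

theorem binaryValue_lt {k : ℕ} (B : Finset (Fin k)) : binaryValue B < 2 ^ k := by
  rw [binaryValue_eq_sum_map]
  refine Nat.geomSum_lt le_rfl fun m hm => ?_
  obtain ⟨i, -, rfl⟩ := mem_map.1 hm
  exact Fin.is_lt _

theorem binaryValue_injective {k : ℕ} : Function.Injective (binaryValue (k := k)) := by
  intro B C h
  simp only [binaryValue_eq_sum_map] at h
  exact map_injective _ (geomSum_injective le_rfl h)

/-- The rows of a Boolean matrix with an odd number of ones. -/
def oddRows {κ σ : Type*} [Fintype κ] [Fintype σ] (z : κ × σ → Bool) : Finset κ :=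
  {i | (∑ j, if z (i, j) then 1 else 0) % 2 = 1}

theorem oddRows_setColumn_injective {κ σ : Type*} [Fintype κ] [Fintype σ] (j : σ)
    (z : κ × σ → Bool) : Function.Injective fun y => oddRows (setColumn j y z) := by
  classical
  intro y y' h
  funext i
  have mem_iff : i ∈ oddRows (setColumn j y z) ↔ i ∈ oddRows (setColumn j y' z) := by
    simp only at h
    rw [h]
  have row_count (y : κ → Bool) : (∑ s, if setColumn j y z (i, s) then 1 else 0) =
      (if y i then 1 else 0) + ∑ s ∈ univ.erase j, if z (i, s) then 1 else 0 := by
    rw [← add_sum_erase _ _ (mem_univ j)]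
    congr 1
    · rw [setColumn_apply_self]
    · exact sum_congr rfl fun s hs => by rw [setColumn_apply_of_ne (ne_of_mem_erase hs)]
  simp only [oddRows, mem_filter_univ, row_count] at mem_iff
  grind

variable {n : ℕ} (hn : 2 ≤ n)

/-- The index of the bit of `x` selected by the matrix input `z` of `A_n`. -/
def andreevAddress (z : Fin (andreevK n) × Fin (andreevR n) → Bool) : Fin (andreevM n) :=
  ⟨binaryValue (oddRows z), (binaryValue_lt _).trans_le
    (Nat.pow_log_le_self 2 (Nat.div_pos hn two_pos).ne')⟩

theorem andreev_iff (x : Fin (andreevM n) → Bool)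
    (z : Fin (andreevK n) × Fin (andreevR n) → Bool) :
    andreev n x (Function.curry z) ↔ x (andreevAddress hn z) := by
  have address_eq : (∑ i, if (∑ j, if Function.curry z i j then 1 else 0) % 2 = 1
      then 2 ^ (andreevK n - 1 - (i : ℕ)) else 0) = (andreevAddress hn z : ℕ) :=
    (sum_filter _ _).symm
  simp only [andreev, address_eq, Fin.is_lt, dite_true]

theorem andreevAddress_setColumn_injective (j : Fin (andreevR n))
    (z : Fin (andreevK n) × Fin (andreevR n) → Bool) :
    Function.Injective fun y => andreevAddress hn (setColumn j y z) := fun _ _ h =>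
  oddRows_setColumn_injective j z (binaryValue_injective (congrArg Fin.val h))

end Address

/-! ### The lower bound -/

theorem two_mul_le_expect_propSign {Ω : Type*} [Fintype Ω] [Nonempty Ω] {p : Ω → Prop}
    [DecidablePred p] {ε : ℝ} (h : (1 / 2 + ε) * Fintype.card Ω ≤ #{ω | p ω}) :
    2 * ε ≤ 𝔼 ω, propSign (p ω) := by
  have := (le_div_iff₀ (by positivity)).2 h
  rw [expect_propSign, uniformProb_eq_card_div]
  linarith

open Classical in
theorem two_mul_le_expect_propSign_andreev {n : ℕ} (hn : 2 ≤ n) {ε : ℝ} {ι : Type*} [Fintype ι]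
    {wx : ι → Fin (andreevM n) → ℝ} {wa : ι → Fin (andreevK n) → Fin (andreevR n) → ℝ}
    {bias : ι → ℝ} {c₀ : ℝ} {cw : ι → ℝ}
    (h : (1 / 2 + ε) * 2 ^ (andreevM n + andreevK n * andreevR n) ≤
      (#{p : (Fin (andreevM n) → Bool) × (Fin (andreevK n) → Fin (andreevR n) → Bool) |
        (0 ≤ c₀ + ∑ i, cw i * max 0
          ((∑ j, wx i j * zo (p.1 j)) + (∑ q, ∑ s, wa i q s * zo (p.2 q s)) + bias i)) ↔
        andreev n p.1 p.2} : ℝ)) :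
    2 * ε ≤ 𝔼 x : Fin (andreevM n) → Bool, 𝔼 z, propSign
      (ReluAccepts c₀ cw (fun i => linForm (Function.uncurry (wa i)) z +
        (∑ j, wx i j * zo (x j) + bias i)) ↔ x (andreevAddress hn z)) := by
  have input_eq (x : Fin (andreevM n) → Bool) (z : Fin (andreevK n) × Fin (andreevR n) → Bool)
      (i : ι) : ∑ j, wx i j * zo (x j) + ∑ q, ∑ s, wa i q s * zo (Function.curry z q s) + bias i =
        linForm (Function.uncurry (wa i)) z + (∑ j, wx i j * zo (x j) + bias i) := by
    simp only [linForm, Fintype.sum_prod_type, Function.uncurry_apply_pair, Function.curry_apply]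
    ring
  have card_eq : (2 : ℝ) ^ (andreevM n + andreevK n * andreevR n) = Fintype.card
      ((Fin (andreevM n) → Bool) × (Fin (andreevK n) → Fin (andreevR n) → Bool)) := by
    simp [pow_add, pow_mul, pow_right_comm]
  rw [card_eq] at h
  refine (two_mul_le_expect_propSign h).trans_eq ?_
  rw [← univ_product_univ, expect_product]
  refine expect_congr rfl fun x _ => ?_
  rw [← Fintype.expect_equiv (Equiv.curry _ _ _) _ _ fun _ => rfl]
  simp only [Equiv.curry_apply, input_eq, andreev_iff hn, ReluAccepts]

theorem eventually_andreevK_pow_four_le_andreevR :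
    ∀ᶠ n in Filter.atTop, andreevK n ^ 4 ≤ andreevR n := by
  have tendsto_andreevK : Filter.Tendsto andreevK Filter.atTop Filter.atTop :=
    (Filter.tendsto_atTop_atTop_of_monotone Nat.log_monotone fun b =>
      ⟨2 ^ b, (Nat.log_pow one_lt_two b).ge⟩).comp (Nat.tendsto_div_const_atTop two_ne_zero)
  have pow_le : ∀ᶠ k : ℕ in Filter.atTop, k ^ 5 ≤ 2 ^ k := by
    filter_upwards [(tendsto_pow_const_div_const_pow_of_one_lt 5 one_lt_two).eventually_le_const
      zero_lt_one] with k hk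
    rw [div_le_one (by positivity)] at hk
    exact_mod_cast hk
  filter_upwards [Filter.eventually_ge_atTop 2, tendsto_andreevK.eventually_gt_atTop 0,
    tendsto_andreevK.eventually pow_le] with n hn hk hpow
  rw [andreevR, Nat.le_div_iff_mul_le (by positivity)]
  calc andreevK n ^ 4 * (2 * andreevK n) = 2 * andreevK n ^ 5 := by ring
    _ ≤ 2 * (n / 2) := by
      gcongr
      exact hpow.trans (Nat.pow_log_le_self 2 (Nat.div_pos hn two_pos).ne')
    _ ≤ n := Nat.mul_div_le n 2

open Classical in
theorem ltf_of_relu_andreev_lower_bound_general :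
    ∃ N : ℕ, ∀ n : ℕ, N ≤ n → ∀ ε : ℝ, 0 ≤ ε →
      ∀ (w : ℕ) (wx : Fin w → Fin (andreevM n) → ℝ)
        (wa : Fin w → Fin (andreevK n) → Fin (andreevR n) → ℝ)
        (bias : Fin w → ℝ) (c₀ : ℝ) (cw : Fin w → ℝ),
        (1 / 2 + ε) * 2 ^ (andreevM n + andreevK n * andreevR n) ≤
          (#{p : (Fin (andreevM n) → Bool) × (Fin (andreevK n) → Fin (andreevR n) → Bool) |
            (0 ≤ c₀ + ∑ i, cw i * max 0
              ((∑ j, wx i j * zo (p.1 j)) + (∑ q, ∑ s, wa i q s * zo (p.2 q s)) + bias i)) ↔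
            andreev n p.1 p.2} : ℝ) →
        ε ^ 2 * n ≤ 52 * w + 8 * Real.logb 2 n := by
  obtain ⟨N, hN⟩ := Filter.eventually_atTop.1
    ((Filter.eventually_ge_atTop 4).and eventually_andreevK_pow_four_le_andreevR)
  refine ⟨N, fun n hn ε hε w wx wa bias c₀ cw h => ?_⟩
  obtain ⟨hn4, hkr⟩ := hN n hn
  have hn2 : 2 ≤ n := by lia
  have : NeZero (andreevK n) := ⟨(Nat.log_pos one_lt_two (by lia)).ne'⟩
  have advantage := two_mul_le_expect_propSign_andreev hn2 h
  have correlation := sq_correlation_le_of_card_pow_four_le (by simpa using hkr)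
    (andreevAddress_setColumn_injective hn2) c₀ cw (fun i => Function.uncurry (wa i))
    fun i x => ∑ j, wx i j * zo (x j) + bias i
  simp only [Fintype.card_fin] at correlation
  have le_two_pow : (n : ℝ) ≤ 4 * 2 ^ andreevK n := by
    have : n / 2 < 2 ^ (andreevK n + 1) := Nat.lt_pow_succ_log_self one_lt_two _
    exact_mod_cast (by lia : n ≤ 4 * 2 ^ andreevK n)
  have le_logb : (andreevK n : ℝ) ≤ Real.logb 2 n :=
    (Nat.cast_le.2 (Nat.log_mono_right (Nat.div_le_self n 2))).trans (Real.natLog_le_logb n 2)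
  calc ε ^ 2 * n ≤ ε ^ 2 * (4 * 2 ^ andreevK n) := by gcongr
    _ = (2 * ε) ^ 2 * 2 ^ andreevK n := by ring
    _ ≤ 52 * w + 8 * andreevK n := le_trans (by gcongr) correlation
    _ ≤ 52 * w + 8 * Real.logb 2 n := by gcongr

theorem eventually_rpow_mul_rpow_le_of_sq_mul_le {δ : ℝ} (hδ0 : 0 < δ) (hδ2 : δ < 2) :
    ∀ᶠ n : ℕ in Filter.atTop, ∀ ε B : ℝ,
      √(2 * Real.logb 2 n ^ (2 / (2 - δ)) / n) < ε →
      ε ^ 2 * n ≤ 52 * B + 8 * Real.logb 2 n →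
      1 / 104 * ε ^ (2 * (1 - δ)) * (n : ℝ) ^ (1 - δ) ≤ B := by
  have hη : 0 < δ / (2 - δ) := div_pos hδ0 (by linarith)
  have tendsto_logb : Filter.Tendsto (fun n : ℕ => Real.logb 2 n) Filter.atTop Filter.atTop :=
    (Real.tendsto_logb_atTop one_lt_two).comp tendsto_natCast_atTop_atTop
  filter_upwards [Filter.eventually_gt_atTop 0, tendsto_logb.eventually_ge_atTop 1,
    ((tendsto_rpow_atTop hη).comp tendsto_logb).eventually_ge_atTop 8] with n hn hL hLη ε B hε hB
  simp only [Function.comp_apply] at hLη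
  have hn' : (0 : ℝ) < n := Nat.cast_pos.2 hn
  have hε0 : 0 ≤ ε := (Real.sqrt_nonneg _).trans hε.le
  have le_T : 16 * Real.logb 2 n ≤ ε ^ 2 * n := by
    have exponent_eq : 2 / (2 - δ) = δ / (2 - δ) + 1 := by
      have : 2 - δ ≠ 0 := by linarith
      field
    have h := Real.lt_sq_of_sqrt_lt hε
    rw [div_lt_iff₀ hn', exponent_eq, Real.rpow_add_one (by positivity)] at h
    nlinarith
  calc 1 / 104 * ε ^ (2 * (1 - δ)) * (n : ℝ) ^ (1 - δ)
      = (ε ^ 2 * n) ^ (1 - δ) / 104 := by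
        rw [Real.mul_rpow (by positivity) hn'.le, Real.rpow_mul hε0, Real.rpow_two]
        ring
    _ ≤ ε ^ 2 * n / 104 := by
        gcongr
        exact Real.rpow_le_self_of_one_le (by linarith) (by linarith)
    _ ≤ B := by linarith

end

open Classical in
/-- almost linear lower bounds on the size of weight-unrestricted
LTF-of-ReLU circuits that match the Andreev function on a `(1/2 + ε)`-fraction of inputs. -/
theorem ltf_of_relu_andreev_lower_bound (δ : ℝ) (hδ0 : 0 < δ) (hδ1 : δ < 1 / 2) :
    ∃ (N : ℕ) (c : ℝ), 0 < c ∧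
      ∀ n : ℕ, N ≤ n →
      ∀ ε : ℝ,
        Real.sqrt (2 * Real.logb 2 n ^ ((2 : ℝ) / (2 - δ)) / n) < ε → ε ≤ 1 / 2 →
      ∀ (w : ℕ) (wx : Fin w → Fin (andreevM n) → ℝ)
        (wa : Fin w → Fin (andreevK n) → Fin (andreevR n) → ℝ)
        (bias : Fin w → ℝ) (c₀ : ℝ) (cw : Fin w → ℝ),
        ((1 / 2 + ε) * 2 ^ (andreevM n + andreevK n * andreevR n) : ℝ) ≤
          (Finset.univ.filter
            (fun p : (Fin (andreevM n) → Bool) ×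
                     (Fin (andreevK n) → Fin (andreevR n) → Bool) =>
              ((0 ≤ c₀ + ∑ i, cw i * max 0
                  ((∑ j, wx i j * zo (p.1 j)) +
                   (∑ q, ∑ s, wa i q s * zo (p.2 q s)) + bias i)) ↔
               andreev n p.1 p.2))).card →
        c * ε ^ (2 * (1 - δ)) * (n : ℝ) ^ ((1 : ℝ) - δ) ≤ w := by
  obtain ⟨N, hN⟩ := ltf_of_relu_andreev_lower_bound_general
  obtain ⟨N', hN'⟩ := Filter.eventually_atTop.1
    (eventually_rpow_mul_rpow_le_of_sq_mul_le hδ0 (by linarith : δ < 2))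
  refine ⟨max N N', 1 / 104, by norm_num, fun n hn ε hε _ w wx wa bias c₀ cw h => ?_⟩
  have hε0 : 0 ≤ ε := (Real.sqrt_nonneg _).trans hε.le
  exact hN' n (le_of_max_le_right hn) ε w hε
    (hN n (le_of_max_le_left hn) ε hε0 w wx wa bias c₀ cw h)
end

section
/- Let m, W ≥ 1 and let a¹, a² ∈ ℤ^m and b ∈ ℤ have all entries of absolute value at most W. Define the 2^m × 2^m real matrix G indexed by (x, y) ∈ {-1,1}^m × {-1,1}^m via G(x,y) = max(0, ⟨a¹, x⟩ + ⟨a², y⟩ + b). Then the map x ↦ ⟨a¹, x⟩ takes at most 2mW + 1 distinct values on {-1,1}^m, likewise for y ↦ ⟨a², y⟩, G(x,y) depends only on the pair (⟨a¹, x⟩, ⟨a², y⟩), and consequently the rank of G is at most 2mW + 1. -/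
/-!
A sum of `m` signed integers of absolute value at most `W` is an integer in `[-mW, mW]`, an interval
with `2mW + 1` integer points. Row `x` of the matrix depends on `x` only through `⟨a₁, x⟩`, so the
matrix is a matrix with at most `2mW + 1` rows in which some rows are repeated, and repeating rows
does not raise the rank.
-/

open Finset

theorem card_le_of_forall_exists_intCast {R : Type*} [IntCast R] {s : Finset R} {N : ℕ}
    (h : ∀ r ∈ s, ∃ k : ℤ, |k| ≤ N ∧ (k : R) = r) : #s ≤ 2 * N + 1 := by
  classical
  have hs : s ⊆ (Icc (-N : ℤ) N).image ((↑) : ℤ → R) := fun r hr => by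
    obtain ⟨k, hk, hkr⟩ := h r hr
    exact mem_image.mpr ⟨k, mem_Icc.mpr (abs_le.mp hk), hkr⟩
  calc #s ≤ #((Icc (-N : ℤ) N).image ((↑) : ℤ → R)) := card_le_card hs
    _ ≤ #(Icc (-N : ℤ) N) := card_image_le
    _ = 2 * N + 1 := by rw [Int.card_Icc]; lia

section

variable {m W : ℕ} {a : Fin m → ℤ}

theorem exists_intCast_eq_sum_mul_pmEnc (ha : ∀ i, |a i| ≤ (W : ℤ)) (x : Fin m → Bool) :
    ∃ k : ℤ, |k| ≤ (m * W : ℕ) ∧ (k : ℝ) = ∑ i, (a i : ℝ) * pmEnc x i := by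
  refine ⟨∑ i, a i * if x i then 1 else -1, ?_, by simp [pmEnc]⟩
  have habs (i : Fin m) : |a i * if x i then 1 else -1| = |a i| := by
    split_ifs <;> simp
  calc |∑ i, a i * if x i then 1 else -1|
      ≤ ∑ i, |a i * if x i then 1 else -1| := abs_sum_le_sum_abs _ _
    _ = ∑ i, |a i| := sum_congr rfl fun i _ => habs i
    _ ≤ ∑ _i : Fin m, (W : ℤ) := sum_le_sum fun i _ => ha i
    _ = (m * W : ℕ) := by simp

theorem card_image_sum_mul_pmEnc_le (ha : ∀ i, |a i| ≤ (W : ℤ)) :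
    #(univ.image fun x : Fin m → Bool => ∑ i, (a i : ℝ) * pmEnc x i) ≤ 2 * m * W + 1 := by
  rw [mul_assoc]
  refine card_le_of_forall_exists_intCast fun r hr => ?_
  obtain ⟨x, -, rfl⟩ := mem_image.mp hr
  exact exists_intCast_eq_sum_mul_pmEnc ha x

end

theorem rank_le_card_image_of_factorsThrough {α β γ R : Type*} [Fintype α] [Fintype β]
    [DecidableEq γ] [CommSemiring R] [StrongRankCondition R] {A : Matrix α β R} {f : α → γ}
    (h : Function.FactorsThrough A f) : A.rank ≤ #(univ.image f) := by
  obtain ⟨g, rfl⟩ := (Function.factorsThrough_iff A).mp h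
  let B : Matrix (univ.image f) β R := Matrix.of fun v => g v
  let r (x : α) : univ.image f := ⟨f x, mem_image_of_mem f (mem_univ x)⟩
  calc (B.submatrix r id).rank ≤ B.rank := B.rank_submatrix_le r id
    _ ≤ Fintype.card (univ.image f) := B.rank_le_card_height
    _ = #(univ.image f) := Fintype.card_coe _

theorem single_relu_matrix_rank_general {R : Type*} [CommSemiring R] [StrongRankCondition R]
    {m W : ℕ} {a₁ a₂ : Fin m → ℤ} (ha₁ : ∀ i, |a₁ i| ≤ (W : ℤ)) (ha₂ : ∀ i, |a₂ i| ≤ (W : ℤ))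
    (gate : ℝ → ℝ → R) :
    #(univ.image fun x : Fin m → Bool => ∑ i, (a₁ i : ℝ) * pmEnc x i) ≤ 2 * m * W + 1 ∧
    #(univ.image fun y : Fin m → Bool => ∑ i, (a₂ i : ℝ) * pmEnc y i) ≤ 2 * m * W + 1 ∧
    (∀ x x' y y' : Fin m → Bool,
      ∑ i, (a₁ i : ℝ) * pmEnc x i = ∑ i, (a₁ i : ℝ) * pmEnc x' i →
      ∑ i, (a₂ i : ℝ) * pmEnc y i = ∑ i, (a₂ i : ℝ) * pmEnc y' i →
      gate (∑ i, (a₁ i : ℝ) * pmEnc x i) (∑ i, (a₂ i : ℝ) * pmEnc y i) =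
        gate (∑ i, (a₁ i : ℝ) * pmEnc x' i) (∑ i, (a₂ i : ℝ) * pmEnc y' i)) ∧
    (Matrix.of fun x y : Fin m → Bool =>
        gate (∑ i, (a₁ i : ℝ) * pmEnc x i) (∑ i, (a₂ i : ℝ) * pmEnc y i)).rank
      ≤ 2 * m * W + 1 := by
  have hvalues := card_image_sum_mul_pmEnc_le ha₁
  refine ⟨hvalues, card_image_sum_mul_pmEnc_le ha₂, fun _ _ _ _ => congrArg₂ gate, ?_⟩
  refine (rank_le_card_image_of_factorsThrough fun x x' hx => ?_).trans hvalues
  exact funext fun y => congrArg₂ gate hx rfl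

/-- base case of the block-structure lemma, for a single ReLU gate with
integer weights bounded by `W`. -/
theorem single_relu_matrix_rank (m W : ℕ) (hm : 1 ≤ m) (hW : 1 ≤ W)
    (a₁ a₂ : Fin m → ℤ) (b : ℤ)
    (ha₁ : ∀ i, |a₁ i| ≤ (W : ℤ)) (ha₂ : ∀ i, |a₂ i| ≤ (W : ℤ)) (hb : |b| ≤ (W : ℤ)) :
    (Finset.univ.image
        (fun x : Fin m → Bool => ∑ i, (a₁ i : ℝ) * pmEnc x i)).card ≤ 2 * m * W + 1 ∧
    (Finset.univ.image
        (fun y : Fin m → Bool => ∑ i, (a₂ i : ℝ) * pmEnc y i)).card ≤ 2 * m * W + 1 ∧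
    (∀ x x' y y' : Fin m → Bool,
      (∑ i, (a₁ i : ℝ) * pmEnc x i) = (∑ i, (a₁ i : ℝ) * pmEnc x' i) →
      (∑ i, (a₂ i : ℝ) * pmEnc y i) = (∑ i, (a₂ i : ℝ) * pmEnc y' i) →
      max 0 ((∑ i, (a₁ i : ℝ) * pmEnc x i) + (∑ i, (a₂ i : ℝ) * pmEnc y i) + (b : ℝ)) =
        max 0 ((∑ i, (a₁ i : ℝ) * pmEnc x' i) + (∑ i, (a₂ i : ℝ) * pmEnc y' i) + (b : ℝ))) ∧
    Matrix.rank (Matrix.of fun x y : Fin m → Bool =>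
        max 0 ((∑ i, (a₁ i : ℝ) * pmEnc x i) + (∑ i, (a₂ i : ℝ) * pmEnc y i) + (b : ℝ)))
      ≤ 2 * m * W + 1 :=
  single_relu_matrix_rank_general ha₁ ha₂ fun s t => max 0 (s + t + (b : ℝ))
end

section
/- Let m, W, k ≥ 1 (or k = 0) and widths w_1, ..., w_k ≥ 1. Consider a circuit of ReLU gates of depth k+1 on inputs (x, y) ∈ {-1,1}^m × {-1,1}^m: the first layer computes h^{(1)}_j(x,y) = max(0, ⟨a¹_j, x⟩ + ⟨a²_j, y⟩ + b_j) for j = 1,...,w_1; for 2 ≤ i ≤ k the i-th layer computes h^{(i)}_j = max(0, b^{(i)}_j + Σ_{l=1}^{w_{i-1}} A^{(i)}_{jl} h^{(i-1)}_l); and the single output gate computes g(x,y) = max(0, β + Σ_{l=1}^{w_k} α_l h^{(k)}_l(x,y)). Assume the bottom-layer weights are restricted: all entries of a¹_j, a²_j and b_j are integers of absolute value at most W, and there is a linear order on {-1,1}^m such that for every j both x ↦ ⟨a¹_j, x⟩ and y ↦ ⟨a²_j, y⟩ are nondecreasing with respect to that order. Then, setting D = (Π_{i=1}^k w_i)·(2mW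 + 1), there exist enumerations ρ, ρ' of {-1,1}^m by {1,...,2^m}, nondecreasing maps r, c : {1,...,2^m} → {1,...,D}, and H : {1,...,D} × {1,...,D} → ℝ such that g(ρ(s), ρ'(t)) = H(r(s), c(t)) for all s, t. In particular the 2^m × 2^m matrix [g(x,y)] has rank at most D. -/
open Function

section MonotoneIndex

variable {ι α : Type*} [Fintype ι] [LinearOrder α]

lemma eq_of_sum_eq_of_monotone {M : Type*} [AddCommMonoid M] [PartialOrder M]
    [IsOrderedCancelAddMonoid M] {f : ι → α → M} (hf : ∀ j, Monotone (f j)) {s t : α}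
    (hst : ∑ j, f j s = ∑ j, f j t) (j : ι) : f j s = f j t := by
  wlog hle : s ≤ t generalizing s t
  · exact (this hst.symm (le_of_not_ge hle)).symm
  exact (Finset.sum_eq_sum_iff_of_le fun i _ => hf i hle).mp hst j (Finset.mem_univ j)

lemma exists_monotone_index_of_le {f : ι → α → ℕ} {B D : ℕ} (hf : ∀ j, Monotone (f j))
    (hB : ∀ j s, f j s ≤ B) (hD : Fintype.card ι * B < D) :
    ∃ r : α → Fin D, Monotone r ∧ ∀ j, (f j).FactorsThrough r := by
  have sum_lt (s : α) : ∑ j, f j s < D :=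
    (Finset.sum_le_card_nsmul _ _ B fun j _ => hB j s).trans_lt hD
  exact ⟨fun s => ⟨∑ j, f j s, sum_lt s⟩, fun s t hst => Finset.sum_le_sum fun j _ => hf j hst,
    fun j s t hst => eq_of_sum_eq_of_monotone hf (congrArg Fin.val hst) j⟩

lemma exists_monotone_index_of_abs_le {f : ι → α → ℤ} {C D : ℕ} (hf : ∀ j, Monotone (f j))
    (hC : ∀ j s, |f j s| ≤ C) (hD : Fintype.card ι * (2 * C) < D) :
    ∃ r : α → Fin D, Monotone r ∧ ∀ j, (f j).FactorsThrough r := by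
  have shift_nonneg (j : ι) (s : α) : 0 ≤ f j s + C := by linarith [neg_le_of_abs_le (hC j s)]
  obtain ⟨r, hr, hfr⟩ := exists_monotone_index_of_le (f := fun j s => (f j s + C).toNat)
    (fun j s t hst => Int.toNat_le_toNat (by linarith [hf j hst]))
    (fun j s => Int.toNat_le.mpr (by push_cast; linarith [le_of_abs_le (hC j s)])) hD
  refine ⟨r, hr, fun j s t hst => ?_⟩
  have shifted_eq : (f j s + C).toNat = (f j t + C).toNat := hfr j hst
  have := shift_nonneg j s
  have := shift_nonneg j t
  lia

end MonotoneIndex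

section SignForm

variable {n : ℕ}

/-- The linear form `⟨a, x⟩` of an integer vector `a` on the ±1 encoding of `x`, kept in `ℤ` so that
its values can be counted. -/
def signForm (a : Fin n → ℤ) (x : Fin n → Bool) : ℤ :=
  ∑ i, a i * if x i then 1 else -1

lemma cast_signForm (a : Fin n → ℤ) (x : Fin n → Bool) :
    (signForm a x : ℝ) = ∑ i, (a i : ℝ) * pmEnc x i := by
  simp [signForm, pmEnc]

lemma abs_signForm_le_sum_abs (a : Fin n → ℤ) (x : Fin n → Bool) :
    |signForm a x| ≤ ∑ i, |a i| := by
  refine (Finset.abs_sum_le_sum_abs _ _).trans (Finset.sum_le_sum fun i _ => ?_)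
  split_ifs <;> simp

lemma abs_signForm_le {a : Fin n → ℤ} {W : ℕ} (ha : ∀ i, |a i| ≤ W) (x : Fin n → Bool) :
    |signForm a x| ≤ (n * W : ℕ) :=
  calc |signForm a x| ≤ ∑ i, |a i| := abs_signForm_le_sum_abs a x
    _ ≤ ∑ _i : Fin n, (W : ℤ) := Finset.sum_le_sum fun i _ => ha i
    _ = (n * W : ℕ) := by simp

lemma exists_monotone_index_pmEnc {ι α : Type*} [Fintype ι] [LinearOrder α]
    {a : ι → Fin n → ℤ} {W D : ℕ} (ha : ∀ j i, |a j i| ≤ W) {ρ : α → Fin n → Bool}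
    (hρ : ∀ j, Monotone fun s => ∑ i, (a j i : ℝ) * pmEnc (ρ s) i)
    (hD : Fintype.card ι * (2 * n * W) < D) :
    ∃ r : α → Fin D, Monotone r ∧
      ∀ j, (fun s => ∑ i, (a j i : ℝ) * pmEnc (ρ s) i).FactorsThrough r := by
  simp only [← cast_signForm] at hρ ⊢
  obtain ⟨r, hr, hfr⟩ := exists_monotone_index_of_abs_le (f := fun j s => signForm (a j) (ρ s))
    (fun j s t hst => Int.cast_le.mp (hρ j hst)) (fun j s => abs_signForm_le (ha j) (ρ s))
    (by rwa [← mul_assoc 2])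
  exact ⟨r, hr, fun j => (hfr j).comp_left Int.cast⟩

end SignForm

lemma layer_factorsThrough {X Z R : Type*} {N : ℕ → Type*} {k : ℕ} {h : (i : ℕ) → N i → X → R}
    {φ : (i : ℕ) → N (i + 1) → (N i → R) → R}
    (hstep : ∀ i < k, ∀ j p, h (i + 1) j p = φ i j fun l => h i l p) {e : X → Z}
    (hbase : ∀ j, (h 0 j).FactorsThrough e) {i : ℕ} (hi : i ≤ k) (j : N i) :
    (h i j).FactorsThrough e := by
  induction i with
  | zero => exact hbase j
  | succ i ih =>
    intro p q hpq
    have inputs_eq : (fun l => h i l p) = fun l => h i l q :=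
      funext fun l => ih (Nat.le_of_succ_le hi) l hpq
    rw [hstep i hi, hstep i hi, inputs_eq]

lemma head_le_prod_range {v : ℕ → ℕ} {k : ℕ} (hv : ∀ i < k, 1 ≤ v i) (hvk : v k = 1) :
    v 0 ≤ ∏ i ∈ Finset.range k, v i := by
  rcases k.eq_zero_or_pos with rfl | hk
  · simp [hvk]
  · exact Finset.single_le_prod' (fun i hi => hv i (Finset.mem_range.mp hi))
      (Finset.mem_range.mpr hk)

lemma head_mul_lt_prod_range_mul_succ {v : ℕ → ℕ} {k : ℕ} (hv : ∀ i < k, 1 ≤ v i)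
    (hvk : v k = 1) (B : ℕ) : v 0 * B < (∏ i ∈ Finset.range k, v i) * (B + 1) :=
  calc v 0 * B ≤ (∏ i ∈ Finset.range k, v i) * B :=
        Nat.mul_le_mul_right _ (head_le_prod_range hv hvk)
    _ < (∏ i ∈ Finset.range k, v i) * (B + 1) :=
        Nat.mul_lt_mul_of_pos_left B.lt_succ_self
          (Finset.prod_pos fun i hi => hv i (Finset.mem_range.mp hi))

theorem deep_relu_block_structure_general {m W D k : ℕ} {v : ℕ → ℕ}
    (hD : v 0 * (2 * m * W) < D) {a₁ a₂ : Fin (v 0) → Fin m → ℤ}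
    (ha₁ : ∀ j i, |a₁ j i| ≤ (W : ℤ)) (ha₂ : ∀ j i, |a₂ j i| ≤ (W : ℤ))
    (ρ ρ' : Fin (2 ^ m) ≃ (Fin m → Bool))
    (hρ : ∀ j, Monotone (fun s => ∑ i, (a₁ j i : ℝ) * pmEnc (ρ s) i))
    (hρ' : ∀ j, Monotone (fun t => ∑ i, (a₂ j i : ℝ) * pmEnc (ρ' t) i))
    {φ₀ : Fin (v 0) → ℝ → ℝ → ℝ} {φ : (i : ℕ) → Fin (v (i + 1)) → (Fin (v i) → ℝ) → ℝ}
    {h : (i : ℕ) → Fin (v i) → (Fin m → Bool) → (Fin m → Bool) → ℝ}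
    (hbase : ∀ j x y, h 0 j x y =
      φ₀ j (∑ i, (a₁ j i : ℝ) * pmEnc x i) (∑ i, (a₂ j i : ℝ) * pmEnc y i))
    (hstep : ∀ i < k, ∀ (j : Fin (v (i + 1))) x y, h (i + 1) j x y = φ i j fun l => h i l x y)
    (j₀ : Fin (v k)) :
    ∃ (r c : Fin (2 ^ m) → Fin D) (H : Fin D → Fin D → ℝ), Monotone r ∧ Monotone c ∧
      (∀ s t, h k j₀ (ρ s) (ρ' t) = H (r s) (c t)) ∧
      Matrix.rank (Matrix.of fun x y : Fin m → Bool => h k j₀ x y) ≤ D := by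
  rw [← Fintype.card_fin (v 0)] at hD
  obtain ⟨r, hr, hfr⟩ := exists_monotone_index_pmEnc ha₁ hρ hD
  obtain ⟨c, hc, hfc⟩ := exists_monotone_index_pmEnc ha₂ hρ' hD
  have bottom_factors (j : Fin (v 0)) :
      (fun p : Fin (2 ^ m) × Fin (2 ^ m) => h 0 j (ρ p.1) (ρ' p.2)).FactorsThrough
        (Prod.map r c) := by
    intro p q hpq
    obtain ⟨hp, hq⟩ := Prod.mk.inj hpq
    simp only [hbase]
    exact congrArg₂ (φ₀ j) (hfr j hp) (hfc j hq)
  have output_factors := layer_factorsThrough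
    (h := fun i j (p : Fin (2 ^ m) × Fin (2 ^ m)) => h i j (ρ p.1) (ρ' p.2))
    (fun i hi j p => hstep i hi j _ _) bottom_factors le_rfl j₀
  obtain ⟨H, hH⟩ := (factorsThrough_iff _).mp output_factors
  have blocks (s t : Fin (2 ^ m)) : h k j₀ (ρ s) (ρ' t) = curry H (r s) (c t) :=
    congrFun hH (s, t)
  refine ⟨r, c, curry H, hr, hc, blocks, ?_⟩
  have submatrix_eq : (Matrix.of fun x y : Fin m → Bool => h k j₀ x y) =
      (Matrix.of (curry H)).submatrix (r ∘ ρ.symm) (c ∘ ρ'.symm) := by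
    ext x y
    simpa using blocks (ρ.symm x) (ρ'.symm y)
  rw [submatrix_eq]
  exact (Matrix.rank_submatrix_le ..).trans (Matrix.rank_le_width _)

/-- block structure and rank bound for a depth-`(k+1)` circuit of ReLU
gates (hidden widths `v 0, …, v (k-1)`, a single output ReLU gate at layer `k`) whose
bottom-layer weights are integers of magnitude at most `W` ordering the hypercube
monotonically along a common linear order. -/
theorem deep_relu_block_structure (m W k : ℕ) (hm : 1 ≤ m) (hW : 1 ≤ W)
    (v : ℕ → ℕ) (hv : ∀ i < k, 1 ≤ v i) (hvk : v k = 1)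
    (a₁ a₂ : Fin (v 0) → Fin m → ℤ) (b : Fin (v 0) → ℤ)
    (ha₁ : ∀ j i, |a₁ j i| ≤ (W : ℤ)) (ha₂ : ∀ j i, |a₂ j i| ≤ (W : ℤ))
    (hb : ∀ j, |b j| ≤ (W : ℤ))
    (horder : ∃ ρ : Fin (2 ^ m) ≃ (Fin m → Bool), ∀ j : Fin (v 0),
      Monotone (fun s => ∑ i, (a₁ j i : ℝ) * pmEnc (ρ s) i) ∧
      Monotone (fun s => ∑ i, (a₂ j i : ℝ) * pmEnc (ρ s) i))
    (A : (i : ℕ) → Fin (v (i + 1)) → Fin (v i) → ℝ)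
    (bw : (i : ℕ) → Fin (v (i + 1)) → ℝ)
    (h : (i : ℕ) → Fin (v i) → (Fin m → Bool) → (Fin m → Bool) → ℝ)
    (hbase : ∀ j x y, h 0 j x y =
      max 0 ((∑ i, (a₁ j i : ℝ) * pmEnc x i) + (∑ i, (a₂ j i : ℝ) * pmEnc y i) + (b j : ℝ)))
    (hstep : ∀ i < k, ∀ (j : Fin (v (i + 1))) x y,
      h (i + 1) j x y = max 0 (bw i j + ∑ l, A i j l * h i l x y))
    (j₀ : Fin (v k)) :
    ∃ (ρ ρ' : Fin (2 ^ m) ≃ (Fin m → Bool))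
      (r c : Fin (2 ^ m) → Fin ((∏ i ∈ Finset.range k, v i) * (2 * m * W + 1)))
      (H : Fin ((∏ i ∈ Finset.range k, v i) * (2 * m * W + 1)) →
           Fin ((∏ i ∈ Finset.range k, v i) * (2 * m * W + 1)) → ℝ),
      Monotone r ∧ Monotone c ∧
      (∀ s t, h k j₀ (ρ s) (ρ' t) = H (r s) (c t)) ∧
      Matrix.rank (Matrix.of fun x y : Fin m → Bool => h k j₀ x y) ≤
        (∏ i ∈ Finset.range k, v i) * (2 * m * W + 1) := by
  obtain ⟨ρ, hρ⟩ := horder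
  exact ⟨ρ, ρ, deep_relu_block_structure_general (head_mul_lt_prod_range_mul_succ hv hvk _)
    ha₁ ha₂ ρ ρ (fun j => (hρ j).1) (fun j => (hρ j).2) (φ₀ := fun j p q => max 0 (p + q + b j))
    (φ := fun i j z => max 0 (bw i j + ∑ l, A i j l * z l)) hbase hstep j₀⟩
end

section
/- There exists a universal constant c > 0 such that the following holds for all m, W ≥ 1 and d ≥ 2. Let f : {-1,1}^m × {-1,1}^m → {-1,1} be a Boolean function whose associated 2^m × 2^m matrix has sign-rank at least 2^{m^{1/4}}. Then any LTF-of-(ReLU)^{d-1} circuit with layer widths w_1, ..., w_{d-1} whose bottom-layer weights are restricted (all entries of the bottom-layer weight vectors a¹_j, a²_j and biases b_j are integers of absolute value at most W, and there is a linear order on {-1,1}^m such that for every j both x ↦ ⟨a¹_j, x⟩ and y ↦ ⟨a²_j, y⟩ are nondecreasing with respect to that order) that computes f on all of {-1,1}^m × {-1,1}^m must have size 1 + Σ_{k=1}^{d-1} w_k ≥ c · (d-1) · 2^{m^{1/8}/(d-1)} / (mW)^{1/(d-1)}. -/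
/-- The sign-rank of a `±1` matrix `A`: the least rank of a real matrix whose entries all
have the same strict sign as the corresponding entries of `A`. -/
noncomputable def signRank {ι κ : Type*} [Fintype ι] [Fintype κ]
    (A : Matrix ι κ ℝ) : ℕ :=
  sInf {r : ℕ | ∃ B : Matrix ι κ ℝ, (∀ s t, 0 < A s t * B s t) ∧ B.rank = r}

theorem signRank_le_rank {ι κ : Type*} [Fintype ι] [Fintype κ] {A : Matrix ι κ ℝ}
    (hA : ∀ s t, A s t ≠ 0) : signRank A ≤ A.rank :=
  Nat.sInf_le ⟨A, fun s t => mul_self_pos.2 (hA s t), rfl⟩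

theorem rank_le_ncard_range_of_factorsThrough {ι κ γ R : Type*} [Finite ι] [Fintype κ]
    [CommSemiring R] [StrongRankCondition R] {A : Matrix ι κ R} {g : ι → γ}
    (hA : Function.FactorsThrough A g) : A.rank ≤ (Set.range g).ncard := by
  obtain ⟨r, rfl⟩ := (Function.factorsThrough_iff A).1 hA
  have := Fintype.ofFinite (Set.range g)
  let B : Matrix (Set.range g) κ R := Matrix.of fun i => r i
  calc Matrix.rank (r ∘ g) = (B.submatrix (Set.rangeFactorization g) id).rank := rfl
    _ ≤ B.rank := B.rank_submatrix_le _ _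
    _ ≤ Fintype.card (Set.range g) := B.rank_le_card_height
    _ = (Set.range g).ncard := Fintype.card_eq_nat_card

theorem sum_injOn_of_isChain {J M : Type*} [Fintype J] [AddCommMonoid M] [PartialOrder M]
    [IsOrderedCancelAddMonoid M] {S : Set (J → M)} (hS : IsChain (· ≤ ·) S) :
    Set.InjOn (fun u => ∑ j, u j) S := by
  intro u hu u' hu' hsum
  rcases hS.total hu hu' with hle | hle
  · exact hle.eq_of_not_lt fun hlt => (Fintype.sum_strictMono hlt).ne hsum
  · exact (hle.eq_of_not_lt fun hlt => (Fintype.sum_strictMono hlt).ne hsum.symm).symm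

theorem ncard_le_of_isChain_of_abs_le {J : Type*} [Fintype J] {S : Set (J → ℤ)} {N : ℕ}
    (hS : IsChain (· ≤ ·) S) (hN : ∀ u ∈ S, ∀ j, |u j| ≤ N) :
    S.ncard ≤ 2 * (Fintype.card J * N) + 1 := by
  have hmaps : ∀ u ∈ S, ∑ j, u j ∈
      (Finset.Icc (-(Fintype.card J * N : ℤ)) (Fintype.card J * N) : Set ℤ) := by
    intro u hu
    rw [Finset.mem_coe, Finset.mem_Icc, ← abs_le]
    calc |∑ j, u j| ≤ ∑ j, |u j| := Finset.abs_sum_le_sum_abs _ _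
      _ ≤ Fintype.card J * N := by
          simpa using Finset.sum_le_card_nsmul Finset.univ _ _ fun j _ => hN u hu j
  calc S.ncard ≤ _ := Set.ncard_le_ncard_of_injOn _ hmaps (sum_injOn_of_isChain hS)
        (Finset.finite_toSet _)
    _ = 2 * (Fintype.card J * N) + 1 := by
        rw [Set.ncard_coe_finset, Int.card_Icc]
        lia

/-- The integer `⟨a, x⟩`, where `x` is read as a vector of signs: this is the contribution of `x`
to a bottom gate with weight vector `a`. -/
def signedSum {n : ℕ} (a : Fin n → ℤ) (x : Fin n → Bool) : ℤ :=
  ∑ i, a i * if x i then 1 else -1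

theorem cast_signedSum {n : ℕ} (a : Fin n → ℤ) (x : Fin n → Bool) :
    (signedSum a x : ℝ) = ∑ i, (a i : ℝ) * pmEnc x i := by
  simp [signedSum, pmEnc]

theorem abs_signedSum_le {n : ℕ} {W : ℤ} {a : Fin n → ℤ} (ha : ∀ i, |a i| ≤ W)
    (x : Fin n → Bool) : |signedSum a x| ≤ n * W := by
  have hterm : ∀ i, |a i * if x i then 1 else -1| ≤ W := by
    intro i
    split_ifs <;> simpa using ha i
  calc |signedSum a x| ≤ ∑ i, |a i * if x i then 1 else -1| := Finset.abs_sum_le_sum_abs _ _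
    _ ≤ n * W := by simpa using Finset.sum_le_card_nsmul Finset.univ _ _ fun i _ => hterm i

/-- `f` is computed by a linear threshold function on top of `n + 1` layers with activation `σ` and
widths `v 0, …, v n`, where the bottom gate `j` has pre-activation `p j x + q j y`. The value of
gate `j` of layer `i` is `h i j x y`. The LTF-of-(ReLU)^{d-1} circuits of the paper are the case
`σ = max 0`, `n = d - 2` with `p j` linear and `q j` affine. -/
def IsLTFOfLayers {X Y : Type*} (σ : ℝ → ℝ) (n : ℕ) (v : ℕ → ℕ) (p : Fin (v 0) → X → ℝ)
    (q : Fin (v 0) → Y → ℝ) (f : X → Y → ℝ) : Prop :=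
  ∃ (A : (i : ℕ) → Fin (v (i + 1)) → Fin (v i) → ℝ) (b : (i : ℕ) → Fin (v (i + 1)) → ℝ)
    (α : Fin (v n) → ℝ) (β : ℝ) (h : (i : ℕ) → Fin (v i) → X → Y → ℝ),
    (∀ j x y, h 0 j x y = σ (p j x + q j y)) ∧
    (∀ i < n, ∀ j x y, h (i + 1) j x y = σ (b i j + ∑ l, A i j l * h i l x y)) ∧
    ∀ x y, (if 0 ≤ β + ∑ j, α j * h n j x y then (1 : ℝ) else -1) = f x y

namespace IsLTFOfLayers

variable {X Y : Type*} {σ : ℝ → ℝ} {n : ℕ} {v : ℕ → ℕ} {q : Fin (v 0) → Y → ℝ} {f : X → Y → ℝ}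

theorem ne_zero {p : Fin (v 0) → X → ℝ} (hf : IsLTFOfLayers σ n v p q f) (x : X) (y : Y) :
    f x y ≠ 0 := by
  obtain ⟨A, b, α, β, h, -, -, hout⟩ := hf
  rw [← hout]
  split_ifs <;> norm_num

theorem factorsThrough {p : Fin (v 0) → X → ℝ} (hf : IsLTFOfLayers σ n v p q f) :
    Function.FactorsThrough f fun x j => p j x := by
  obtain ⟨A, b, α, β, h, hbottom, hstep, hout⟩ := hf
  intro x x' hx
  have hbottom_eq : ∀ j, p j x = p j x' := congrFun hx
  have hlayer : ∀ i ≤ n, ∀ j y, h i j x y = h i j x' y := by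
    intro i
    induction i with
    | zero => intro _ j y; rw [hbottom, hbottom, hbottom_eq j]
    | succ i ih =>
      intro hi j y
      simp only [hstep i hi, ih (Nat.le_of_succ_le hi)]
  funext y
  simp only [← hout, hlayer n le_rfl]

theorem signRank_le [Fintype X] [Fintype Y] {N : ℕ} {p : Fin (v 0) → X → ℤ}
    (hf : IsLTFOfLayers σ n v (fun j x => (p j x : ℝ)) q f) (hp : ∀ j x, |p j x| ≤ N)
    (hchain : IsChain (· ≤ ·) (Set.range fun x j => p j x)) :
    signRank (Matrix.of f) ≤ 2 * (v 0 * N) + 1 := by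
  have hfactor : Function.FactorsThrough (Matrix.of f) fun x j => p j x := fun x x' hx =>
    hf.factorsThrough (funext fun j => congrArg Int.cast (congrFun hx j))
  calc signRank (Matrix.of f) ≤ (Matrix.of f).rank := signRank_le_rank hf.ne_zero
    _ ≤ (Set.range fun x j => p j x).ncard := rank_le_ncard_range_of_factorsThrough hfactor
    _ ≤ 2 * (v 0 * N) + 1 := by
        simpa using ncard_le_of_isChain_of_abs_le hchain
          (Set.forall_mem_range.2 fun x j => hp j x)

end IsLTFOfLayers

theorem mul_rpow_inv_le {k u : ℝ} (hk : 1 ≤ k) (hu : 0 ≤ u) :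
    k * u ^ (1 / k) ≤ u + (k - 1) := by
  have hk0 : 0 < k := by linarith
  have hbernoulli : u ^ (1 / k) ≤ 1 + 1 / k * (u - 1) := by
    simpa only [add_sub_cancel] using rpow_one_add_le_one_add_mul_self (s := u - 1) (by linarith)
      (by positivity) ((div_le_one hk0).2 hk)
  calc k * u ^ (1 / k) ≤ k * (1 + 1 / k * (u - 1)) := by gcongr
    _ = u + (k - 1) := by field_simp; ring

theorem mul_rpow_div_rpow_le {k B N u E : ℝ} (hk : 1 ≤ k) (hB : 0 ≤ B) (hN : 0 < N)
    (h : B ^ E ≤ u * N) : k * B ^ (E / k) / N ^ (1 / k) ≤ u + (k - 1) := by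
  have hdiv : B ^ E / N ≤ u := (div_le_iff₀ hN).2 h
  calc k * B ^ (E / k) / N ^ (1 / k) = k * (B ^ E / N) ^ (1 / k) := by
        rw [Real.div_rpow (by positivity) hN.le, ← Real.rpow_mul hB, mul_one_div, mul_div_assoc]
    _ ≤ k * u ^ (1 / k) := by gcongr
    _ ≤ u + (k - 1) := mul_rpow_inv_le hk ((by positivity : 0 ≤ B ^ E / N).trans hdiv)

theorem head_add_le_sum_range {v : ℕ → ℕ} {n : ℕ} (hv : ∀ i < n, 1 ≤ v (i + 1)) :
    v 0 + n ≤ ∑ i ∈ Finset.range (n + 1), v i := by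
  rw [Finset.sum_range_succ', add_comm]
  gcongr
  simpa using Finset.card_nsmul_le_sum (Finset.range n) _ 1 fun i hi =>
    hv i (Finset.mem_range.1 hi)

theorem ltf_of_relu_exponential_lower_bound_general {X Y : Type*} [Fintype X] [Fintype Y]
    {d N : ℕ} {σ : ℝ → ℝ} {v : ℕ → ℕ} {p : Fin (v 0) → X → ℤ} {q : Fin (v 0) → Y → ℝ}
    {f : X → Y → ℝ} {E : ℝ} (hd : 2 ≤ d) (hN : 1 ≤ N) (hv : ∀ i < d - 1, 1 ≤ v i)
    (hp : ∀ j x, |p j x| ≤ N) (hchain : IsChain (· ≤ ·) (Set.range fun x j => p j x))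
    (hf : IsLTFOfLayers σ (d - 2) v (fun j x => (p j x : ℝ)) q f)
    (hE : (2 : ℝ) ^ E ≤ signRank (Matrix.of f)) :
    1 / 3 * (d - 1) * (2 : ℝ) ^ (E / (d - 1)) / (N : ℝ) ^ ((1 : ℝ) / (d - 1)) ≤
      ((1 + ∑ i ∈ Finset.range (d - 1), v i : ℕ) : ℝ) := by
  obtain ⟨n, rfl⟩ := Nat.exists_eq_add_of_le' hd
  have hk : ((n + 2 : ℕ) : ℝ) - 1 = n + 1 := by push_cast; ring
  have hrank : (signRank (Matrix.of f) : ℝ) ≤ 3 * v 0 * N := by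
    have hone : 1 ≤ v 0 * N := Nat.mul_pos (hv 0 (by lia)) hN
    have hle := hf.signRank_le hp hchain
    have hle' : signRank (Matrix.of f) ≤ 3 * (v 0 * N) := by lia
    rw [mul_assoc]
    exact_mod_cast hle'
  have hroot := mul_rpow_div_rpow_le (k := (n : ℝ) + 1) (le_add_of_nonneg_left n.cast_nonneg)
    zero_le_two (by exact_mod_cast hN) (hE.trans hrank)
  have hsize : (v 0 : ℝ) + n ≤ (∑ i ∈ Finset.range (n + 1), v i : ℕ) := by
    exact_mod_cast head_add_le_sum_range fun i hi => hv (i + 1) (by lia)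
  calc _ = 1 / 3 * ((n + 1) * (2 : ℝ) ^ (E / (n + 1)) / (N : ℝ) ^ ((1 : ℝ) / (n + 1))) := by
        rw [hk]; ring
    _ ≤ 1 / 3 * (3 * v 0 + n) := by linarith
    _ ≤ (v 0 : ℝ) + n := by linarith [n.cast_nonneg (α := ℝ)]
    _ ≤ _ := by push_cast at hsize ⊢; linarith

/-- exponential size lower bound for bottom-layer weight-restricted
LTF-of-(ReLU)^{d-1} circuits computing any Boolean function of sign-rank at least
`2^{m^{1/4}}`. -/
theorem ltf_of_relu_exponential_lower_bound :
    ∃ c : ℝ, 0 < c ∧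
      ∀ (m W d : ℕ), 1 ≤ m → 1 ≤ W → 2 ≤ d →
      ∀ f : (Fin m → Bool) → (Fin m → Bool) → ℝ,
        (∀ x y, f x y = 1 ∨ f x y = -1) →
        ((2 : ℝ) ^ ((m : ℝ) ^ ((1 : ℝ) / 4)) ≤ signRank (Matrix.of f)) →
      ∀ (v : ℕ → ℕ), (∀ i < d - 1, 1 ≤ v i) →
      ∀ (a₁ a₂ : Fin (v 0) → Fin m → ℤ) (b : Fin (v 0) → ℤ),
        (∀ j i, |a₁ j i| ≤ (W : ℤ)) → (∀ j i, |a₂ j i| ≤ (W : ℤ)) →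
        (∀ j, |b j| ≤ (W : ℤ)) →
        (∃ ρ : Fin (2 ^ m) ≃ (Fin m → Bool), ∀ j : Fin (v 0),
          Monotone (fun s => ∑ i, (a₁ j i : ℝ) * pmEnc (ρ s) i) ∧
          Monotone (fun s => ∑ i, (a₂ j i : ℝ) * pmEnc (ρ s) i)) →
      ∀ (A : (i : ℕ) → Fin (v (i + 1)) → Fin (v i) → ℝ)
        (bw : (i : ℕ) → Fin (v (i + 1)) → ℝ)
        (α : Fin (v (d - 2)) → ℝ) (β : ℝ)
        (h : (i : ℕ) → Fin (v i) → (Fin m → Bool) → (Fin m → Bool) → ℝ),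
        (∀ j x y, h 0 j x y =
          max 0 ((∑ i, (a₁ j i : ℝ) * pmEnc x i) +
                 (∑ i, (a₂ j i : ℝ) * pmEnc y i) + (b j : ℝ))) →
        (∀ i, i + 1 < d - 1 → ∀ (j : Fin (v (i + 1))) x y,
          h (i + 1) j x y = max 0 (bw i j + ∑ l, A i j l * h i l x y)) →
        (∀ x y, (if 0 ≤ β + ∑ j, α j * h (d - 2) j x y then (1 : ℝ) else -1) = f x y) →
        c * (d - 1) * (2 : ℝ) ^ ((m : ℝ) ^ ((1 : ℝ) / 8) / (d - 1)) /
            ((m * W : ℝ)) ^ ((1 : ℝ) / (d - 1)) ≤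
          ((1 + ∑ i ∈ Finset.range (d - 1), v i : ℕ) : ℝ) := by
  refine ⟨1 / 3, by norm_num, ?_⟩
  intro m W d hm hW hd f _ hrank v hv a₁ a₂ b ha₁ _ _ ⟨ρ, hρ⟩ A bw α β h hbottom hstep hout
  have hchain : IsChain (· ≤ ·) (Set.range fun x j => signedSum (a₁ j) x) := by
    rw [← ρ.surjective.range_comp]
    refine Monotone.isChain_range fun s t hst j => ?_
    have hle := (hρ j).1 hst
    simp only [← cast_signedSum] at hle
    exact_mod_cast hle
  have hcircuit : IsLTFOfLayers (max 0) (d - 2) v (fun j x => (signedSum (a₁ j) x : ℝ))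
      (fun j y => ∑ i, (a₂ j i : ℝ) * pmEnc y i + b j) f :=
    ⟨A, bw, α, β, h, fun j x y => by simp only [hbottom, cast_signedSum, add_assoc],
      fun i hi => hstep i (by lia), hout⟩
  have hrank_eighth : (2 : ℝ) ^ ((m : ℝ) ^ ((1 : ℝ) / 8)) ≤ signRank (Matrix.of f) := by
    refine le_trans ?_ hrank
    gcongr <;> norm_num [hm]
  simpa only [Nat.cast_mul] using ltf_of_relu_exponential_lower_bound_general hd
    (Nat.mul_pos hm hW) hv (fun j x => by simpa using abs_signedSum_le (ha₁ j) x) hchain hcircuit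
    hrank_eighth
end
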